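/- arXiv:2206.03533 — 4 statements merged into one kernel-verified Lean document; each statement's English description precedes it below -/
import Mathlib

section
/- Let R be a coherent ring and M an R-module with at least one exact sequence 0 → P_n → P_{n-1} → ... → P_0 → M → 0 with each P_i w-FP-projective. Then for every exact sequence 0 → Q_n → Q_{n-1} → ... → Q_0 → M → 0 with Q_0,...,Q_{n-1} projective, the module Q_n is w-FP-projective. -/
open CategoryTheory

universe u

noncomputable section

variable (R : Type u) [CommRing R]

/-- The Ext group `Ext^n_R(M, N)` as an `R`-module (via `ModuleCat`). -/
def extMod (M N : Type u) [AddCommGroup M] [Module R M]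
    [AddCommGroup N] [Module R N] (n : ℕ) : ModuleCat R :=
  ((Ext R (ModuleCat R) n).obj (Opposite.op (ModuleCat.of R M))).obj (ModuleCat.of R N)

/-- `J` is a Glaz–Vasconcelos ideal: finitely generated and the natural map
`R → Hom_R(J, R)` is bijective. -/
def IsGVIdeal (J : Ideal R) : Prop :=
  J.FG ∧ Function.Bijective (fun r : R => (r • J.subtype : J →ₗ[R] R))

/-- A module is GV-torsion if every element is annihilated by some GV-ideal. -/
def IsGVTorsion (M : Type u) [AddCommGroup M] [Module R M] : Prop :=
  ∀ x : M, ∃ J : Ideal R, IsGVIdeal R J ∧ ∀ j ∈ J, j • x = 0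

/-- An ideal `I` is a `w`-ideal if it is `w`-closed: whenever `J x ⊆ I` for some
GV-ideal `J`, one has `x ∈ I`. -/
def IsWIdeal (I : Ideal R) : Prop :=
  ∀ (x : R) (J : Ideal R), IsGVIdeal R J → (∀ j ∈ J, j * x ∈ I) → x ∈ I

/-- `R` is a DW-ring if every maximal ideal is a `w`-ideal. -/
def IsDWRing : Prop :=
  ∀ m : Ideal R, m.IsMaximal → IsWIdeal R m

/-- `A` is absolutely `w`-pure if `Ext^1_R(N, A)` is GV-torsion for every
finitely presented module `N`. -/
def IsAbsolutelyWPure (A : Type u) [AddCommGroup A] [Module R A] : Prop :=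
  ∀ (N : Type u) [AddCommGroup N] [Module R N], Module.FinitePresentation R N →
    IsGVTorsion R (extMod R N A 1)

/-- `M` is `w`-FP-projective if `Ext^1_R(M, A) = 0` for every absolutely
`w`-pure module `A`. -/
def IsWFPProjective (M : Type u) [AddCommGroup M] [Module R M] : Prop :=
  ∀ (A : Type u) [AddCommGroup A] [Module R A], IsAbsolutelyWPure R A →
    Subsingleton (extMod R M A 1)

end
def IsCoherentRing (R : Type u) [CommRing R] : Prop :=
  ∀ I : Ideal R, I.FG → Module.FinitePresentation R I


open CategoryTheory in
/-- Homology of a short complex of modules, concretely. -/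
theorem shortComplex_homology_presentation {R : Type u} [CommRing R]
    (S : ShortComplex (ModuleCat.{u} R)) :
    ∃ ψ : LinearMap.ker S.g.hom →ₗ[R] S.homology, Function.Surjective ψ ∧
      ∀ x, ψ x = 0 ↔ ∃ y, S.f.hom y = x.1 := by
  refine ⟨S.moduleCatHomologyIso.toLinearEquiv.symm.toLinearMap ∘ₗ
    (LinearMap.range S.moduleCatToCycles).mkQ, ?_, ?_⟩
  · exact (S.moduleCatHomologyIso.toLinearEquiv.symm.surjective).comp
      (Submodule.mkQ_surjective _)
  · intro x
    refine (LinearEquiv.map_eq_zero_iff S.moduleCatHomologyIso.toLinearEquiv.symm).trans ?_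
    refine (Submodule.Quotient.mk_eq_zero (LinearMap.range S.moduleCatToCycles)).trans ?_
    constructor
    · rintro ⟨y, hy⟩
      exact ⟨y, congrArg Subtype.val hy⟩
    · rintro ⟨y, hy⟩
      exact ⟨y, Subtype.ext hy⟩

open CategoryTheory in
/-- `Ext^1` computed from one particular projective presentation. -/
theorem extMod_one_exists (R : Type u) [CommRing R] (N : Type u) [AddCommGroup N] [Module R N] :
    ∃ (F : ModuleCat.{u} R) (p : F →ₗ[R] N), Module.Projective R F ∧ Function.Surjective p ∧
      ∀ (A : Type u) [AddCommGroup A] [Module R A],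
        ∃ φ : (LinearMap.ker p →ₗ[R] A) →ₗ[R] extMod R N A 1, Function.Surjective φ ∧
          ∀ f, φ f = 0 ↔ ∃ g : F →ₗ[R] A, g ∘ₗ (LinearMap.ker p).subtype = f := by
  let P := projectiveResolution (ModuleCat.of R N)
  let p : P.complex.X 0 →ₗ[R] N := (P.π.f 0).hom
  have hp : Function.Surjective p := (ModuleCat.epi_iff_surjective (P.π.f 0)).1 inferInstance
  have hpd : ∀ x, p ((P.complex.d 1 0).hom x) = 0 := fun x =>
    congrArg (fun t => t.hom x) P.complex_d_comp_π_f_zero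
  have hex0 : ∀ y, p y = 0 → ∃ x, (P.complex.d 1 0).hom x = y := by
    intro y hy
    exact (ShortComplex.moduleCat_exact_iff _).1 P.exact₀ y hy
  have hex1 : ∀ y, (P.complex.d 1 0).hom y = 0 → ∃ x, (P.complex.d 2 1).hom x = y := by
    intro y hy
    exact (ShortComplex.moduleCat_exact_iff _).1 (P.exact_succ 0) y hy
  have hdd : ∀ x, (P.complex.d 1 0).hom ((P.complex.d 2 1).hom x) = 0 := fun x =>
    congrArg (fun t => t.hom x) (P.complex.d_comp_d 2 1 0)
  refine ⟨P.complex.X 0, p, ?_, hp, ?_⟩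
  · exact (IsProjective.iff_projective _).2 (P.projective 0)
  intro A _ _
  let C := P.complex.linearYonedaObj R (ModuleCat.of R A)
  let e : extMod R N A 1 ≅ (C.sc' 0 1 2).homology :=
    P.isoExt 1 (ModuleCat.of R A) ≪≫ (ShortComplex.homologyMapIso
      (C.isoSc' 0 1 2 (by simp) (by simp)))
  obtain ⟨ψ, hψs, hψ⟩ := shortComplex_homology_presentation (C.sc' 0 1 2)
  let d : P.complex.X 1 →ₗ[R] LinearMap.ker p :=
    (P.complex.d 1 0).hom.codRestrict _ hpd
  have hd : Function.Surjective d := by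
    rintro ⟨y, hy⟩
    obtain ⟨x, hx⟩ := hex0 y hy
    exact ⟨x, Subtype.ext hx⟩
  let c : (LinearMap.ker p →ₗ[R] A) →ₗ[R] LinearMap.ker (C.sc' 0 1 2).g.hom :=
    { toFun := fun f => ⟨(ModuleCat.ofHom (f ∘ₗ d) : P.complex.X 1 ⟶ ModuleCat.of R A), by
        change P.complex.d 2 1 ≫ ModuleCat.ofHom (f ∘ₗ d) = 0
        ext x
        have : d ((P.complex.d 2 1).hom x) = 0 := Subtype.ext (hdd x)
        exact (congrArg f this).trans (map_zero f)⟩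
      map_add' := fun f g => rfl
      map_smul' := fun r f => rfl }
  refine ⟨e.toLinearEquiv.symm.toLinearMap ∘ₗ ψ ∘ₗ c, ?_, ?_⟩
  · refine e.toLinearEquiv.symm.surjective.comp (hψs.comp ?_)
    rintro ⟨(h : P.complex.X 1 ⟶ ModuleCat.of R A), hh⟩
    change P.complex.d 2 1 ≫ h = 0 at hh
    have hk : LinearMap.ker d ≤ LinearMap.ker h.hom := by
      intro x hx
      obtain ⟨y, rfl⟩ := hex1 x (congrArg Subtype.val hx)
      exact congrArg (fun t => t.hom y) hh
    let f : LinearMap.ker p →ₗ[R] A :=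
      ((LinearMap.ker d).liftQ h.hom hk) ∘ₗ (d.quotKerEquivOfSurjective hd).symm.toLinearMap
    refine ⟨f, Subtype.ext ?_⟩
    change ModuleCat.ofHom (f ∘ₗ d) = h
    ext x
    change (LinearMap.ker d).liftQ h.hom hk ((d.quotKerEquivOfSurjective hd).symm (d x)) = h.hom x
    have : (d.quotKerEquivOfSurjective hd).symm (d x) = (LinearMap.ker d).mkQ x := by
      rw [LinearEquiv.symm_apply_eq]; rfl
    rw [this]; rfl
  · intro f
    rw [LinearMap.comp_apply, LinearEquiv.coe_coe, LinearEquiv.map_eq_zero_iff,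
      LinearMap.comp_apply, hψ]
    constructor
    · rintro ⟨(y : P.complex.X 0 ⟶ ModuleCat.of R A), hy⟩
      change P.complex.d 1 0 ≫ y = ModuleCat.ofHom (f ∘ₗ d) at hy
      refine ⟨y.hom, ?_⟩
      ext z
      obtain ⟨x, rfl⟩ := hd z
      exact congrArg (fun t => t.hom x) hy
    · rintro ⟨g, hg⟩
      refine ⟨(ModuleCat.ofHom g : P.complex.X 0 ⟶ ModuleCat.of R A), ?_⟩
      change P.complex.d 1 0 ≫ ModuleCat.ofHom g = ModuleCat.ofHom (f ∘ₗ d)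
      subst hg
      rfl

/-- `Ext^1` computed from an arbitrary projective presentation. -/
theorem extMod_one_presentation {R : Type u} [CommRing R] {N F A : Type u}
    [AddCommGroup N] [Module R N] [AddCommGroup F] [Module R F] [AddCommGroup A] [Module R A]
    [Module.Projective R F] (p : F →ₗ[R] N) (hp : Function.Surjective p) :
    ∃ φ : (LinearMap.ker p →ₗ[R] A) →ₗ[R] extMod R N A 1, Function.Surjective φ ∧
      ∀ f, φ f = 0 ↔ ∃ g : F →ₗ[R] A, g ∘ₗ (LinearMap.ker p).subtype = f := by
  obtain ⟨G, q, hG, hq, H⟩ := extMod_one_exists R N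
  obtain ⟨φ, hφs, hφ⟩ := H A
  obtain ⟨α, hα⟩ := Module.projective_lifting_property q p hq
  obtain ⟨β, hβ⟩ := Module.projective_lifting_property p q hp
  have hα' : ∀ x, q (α x) = p x := fun x => congrArg (fun t => t x) hα
  have hβ' : ∀ x, p (β x) = q x := fun x => congrArg (fun t => t x) hβ
  let b : LinearMap.ker q →ₗ[R] LinearMap.ker p := β.restrict (fun x hx => by
    rw [LinearMap.mem_ker] at hx ⊢; rw [hβ', hx])
  let a : LinearMap.ker p →ₗ[R] LinearMap.ker q := α.restrict (fun x hx => by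
    rw [LinearMap.mem_ker] at hx ⊢; rw [hα', hx])
  let s : F →ₗ[R] LinearMap.ker p := (LinearMap.id - β ∘ₗ α).codRestrict _ (fun x => by
    simp [hα', hβ'])
  let t : G →ₗ[R] LinearMap.ker q := (LinearMap.id - α ∘ₗ β).codRestrict _ (fun x => by
    simp [hα', hβ'])
  have hs : ∀ x : LinearMap.ker p, x = s x.1 + b (a x) := by
    intro x; apply Subtype.ext
    change x.1 = (x.1 - β (α x.1)) + β (α x.1); abel
  have ht : ∀ x : LinearMap.ker q, x = t x.1 + a (b x) := by
    intro x; apply Subtype.ext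
    change x.1 = (x.1 - α (β x.1)) + α (β x.1); abel
  refine ⟨φ ∘ₗ LinearMap.lcomp R A b, ?_, ?_⟩
  · intro z
    obtain ⟨f, rfl⟩ := hφs z
    refine ⟨f ∘ₗ a, ?_⟩
    rw [← sub_eq_zero, LinearMap.comp_apply, ← map_sub, hφ]
    refine ⟨-(f ∘ₗ t), ?_⟩
    ext x
    have := congrArg f (ht x)
    rw [map_add] at this
    change -(f (t x.1)) = f (a (b x)) - f x
    rw [this]; abel
  · intro f
    rw [LinearMap.comp_apply, hφ]
    constructor
    · rintro ⟨g, hg⟩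
      refine ⟨f ∘ₗ s + g ∘ₗ α, ?_⟩
      ext x
      have h1 := congrArg f (hs x)
      have h2 : g (α x.1) = f (b (a x)) := congrArg (fun t => t (a x)) hg
      rw [map_add] at h1
      change f (s x.1) + g (α x.1) = f x
      rw [h1, h2]
    · rintro ⟨g, rfl⟩
      exact ⟨g ∘ₗ β, rfl⟩

section helpers

variable {R : Type u} [CommRing R]

theorem descend_map {F M E : Type u} [AddCommGroup F] [Module R F] [AddCommGroup M] [Module R M]
    [AddCommGroup E] [Module R E] (p : F →ₗ[R] M) (hp : Function.Surjective p) (h : F →ₗ[R] E)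
    (hh : ∀ x, p x = 0 → h x = 0) : ∃ g : M →ₗ[R] E, ∀ x, g (p x) = h x := by
  refine ⟨((LinearMap.ker p).liftQ h hh) ∘ₗ (p.quotKerEquivOfSurjective hp).symm.toLinearMap, ?_⟩
  intro x
  have : (p.quotKerEquivOfSurjective hp).symm (p x) = (LinearMap.ker p).mkQ x := by
    rw [LinearEquiv.symm_apply_eq]; rfl
  rw [LinearMap.comp_apply, LinearEquiv.coe_coe, this]; rfl

theorem corestrict_map {F B E L : Type u} [AddCommGroup F] [Module R F] [AddCommGroup B]
    [Module R B] [AddCommGroup E] [Module R E] [AddCommGroup L] [Module R L]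
    (i : B →ₗ[R] E) (hi : Function.Injective i) (π : E →ₗ[R] L) (hex : Function.Exact i π)
    (h : F →ₗ[R] E) (hh : ∀ x, π (h x) = 0) : ∃ g : F →ₗ[R] B, ∀ x, i (g x) = h x := by
  have hr : ∀ x, h x ∈ LinearMap.range i := fun x => (hex (h x)).1 (hh x)
  refine ⟨(LinearEquiv.ofInjective i hi).symm.toLinearMap ∘ₗ h.codRestrict _ hr, fun x => ?_⟩
  have := (LinearEquiv.ofInjective i hi).apply_symm_apply (h.codRestrict _ hr x)
  exact congrArg Subtype.val this

theorem exists_injective_embedding (B : Type u) [AddCommGroup B] [Module R B] :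
    ∃ (E L : ModuleCat.{u} R) (i : B →ₗ[R] E) (π : E →ₗ[R] L), Module.Injective R E ∧
      Function.Injective i ∧ Function.Exact i π ∧ Function.Surjective π := by
  obtain ⟨⟨J, hJ, f, hf⟩⟩ :=
    (inferInstance : CategoryTheory.EnoughInjectives (ModuleCat.{u} R)).presentation
      (ModuleCat.of R B)
  refine ⟨J, ModuleCat.of R (J ⧸ LinearMap.range f.hom), f.hom, (LinearMap.range f.hom).mkQ,
    (Module.injective_iff_injective_object R J).2 hJ, (ModuleCat.mono_iff_injective f).1 hf,
    ?_, Submodule.mkQ_surjective _⟩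
  exact LinearMap.exact_map_mkQ_range f.hom

variable {M B E L : Type u} [AddCommGroup M] [Module R M] [AddCommGroup B] [Module R B]
  [AddCommGroup E] [Module R E] [AddCommGroup L] [Module R L]

theorem lift_of_ext_zero (hM : Subsingleton (extMod R M B 1))
    (i : B →ₗ[R] E) (hi : Function.Injective i) (π : E →ₗ[R] L) (hex : Function.Exact i π)
    (hπ : Function.Surjective π) (h : M →ₗ[R] L) : ∃ k : M →ₗ[R] E, ∀ x, π (k x) = h x := by
  let p : (M →₀ R) →ₗ[R] M := Finsupp.linearCombination R id
  have hp : Function.Surjective p := Finsupp.linearCombination_id_surjective R M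
  obtain ⟨φ, -, hφ⟩ := extMod_one_presentation (A := B) p hp
  obtain ⟨l, hl⟩ := Module.projective_lifting_property π (h ∘ₗ p) hπ
  have hl' : ∀ x, π (l x) = h (p x) := fun x => congrArg (fun t => t x) hl
  obtain ⟨f, hf⟩ := corestrict_map (F := LinearMap.ker p) i hi π hex (l ∘ₗ (LinearMap.ker p).subtype) (fun x => by
    change π (l x.1) = 0
    have hx : p x.1 = 0 := x.2
    rw [hl', hx, map_zero])
  obtain ⟨g, hg⟩ := (hφ f).1 (Subsingleton.elim _ _)
  obtain ⟨k, hk⟩ := descend_map p hp (l - i ∘ₗ g) (fun x hx => by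
    have h1 : g x = f ⟨x, hx⟩ := congrArg (fun t => t ⟨x, hx⟩) hg
    have h2 : i (f ⟨x, hx⟩) = l x := hf ⟨x, hx⟩
    change l x - i (g x) = 0
    rw [h1, h2, sub_self])
  refine ⟨k, fun y => ?_⟩
  obtain ⟨x, rfl⟩ := hp y
  rw [hk]
  change π (l x - i (g x)) = _
  rw [map_sub, hl', hex.apply_apply_eq_zero, sub_zero]

theorem ext_zero_of_lift [Module.Injective R E]
    (i : B →ₗ[R] E) (hi : Function.Injective i) (π : E →ₗ[R] L) (hex : Function.Exact i π)
    (H : ∀ h : M →ₗ[R] L, ∃ k : M →ₗ[R] E, ∀ x, π (k x) = h x) :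
    Subsingleton (extMod R M B 1) := by
  let p : (M →₀ R) →ₗ[R] M := Finsupp.linearCombination R id
  have hp : Function.Surjective p := Finsupp.linearCombination_id_surjective R M
  obtain ⟨φ, hφs, hφ⟩ := extMod_one_presentation (A := B) p hp
  suffices h0 : ∀ z : extMod R M B 1, z = 0 from ⟨fun a b => (h0 a).trans (h0 b).symm⟩
  intro z
  obtain ⟨f, rfl⟩ := hφs z
  rw [hφ]
  obtain ⟨l, hl⟩ := Module.Injective.out (X := LinearMap.ker p) (LinearMap.ker p).subtype
    (Submodule.injective_subtype _) (i ∘ₗ f)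
  have hl' : ∀ x : LinearMap.ker p, l x.1 = i (f x) := hl
  obtain ⟨h, hh⟩ := descend_map p hp (π ∘ₗ l) (fun x hx => by
    change π (l x) = 0
    rw [hl' ⟨x, hx⟩, hex.apply_apply_eq_zero])
  obtain ⟨k, hk⟩ := H h
  obtain ⟨g, hg⟩ := corestrict_map i hi π hex (l - k ∘ₗ p) (fun x => by
    change π (l x - k (p x)) = 0
    rw [map_sub, hk, hh]; exact sub_self _)
  refine ⟨g, ?_⟩
  ext x
  apply hi
  change i (g x.1) = i (f x)
  have hx : p x.1 = 0 := x.2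
  rw [hg, ← hl']
  change l x.1 - k (p x.1) = _
  rw [hx, map_zero, sub_zero]

theorem extend_of_ext_zero {K P : Type u} [AddCommGroup K] [Module R K] [AddCommGroup P]
    [Module R P] (hM : Subsingleton (extMod R M B 1)) (c : K →ₗ[R] P)
    (hc : Function.Injective c) (q : P →ₗ[R] M) (hcq : Function.Exact c q)
    (hq : Function.Surjective q) (f : K →ₗ[R] B) : ∃ g : P →ₗ[R] B, ∀ x, g (c x) = f x := by
  obtain ⟨E, L, i, π, hE, hi, hex, hπ⟩ := exists_injective_embedding (R := R) B
  obtain ⟨l, hl⟩ := Module.Injective.out c hc (i ∘ₗ f)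
  obtain ⟨h, hh⟩ := descend_map q hq (π ∘ₗ l) (fun x hx => by
    obtain ⟨y, rfl⟩ := (hcq x).1 hx
    change π (l (c y)) = 0
    rw [hl]; exact hex.apply_apply_eq_zero _)
  obtain ⟨k, hk⟩ := lift_of_ext_zero hM i hi π hex hπ h
  obtain ⟨g, hg⟩ := corestrict_map i hi π hex (l - k ∘ₗ q) (fun x => by
    change π (l x - k (q x)) = 0
    rw [map_sub, hk, hh]; exact sub_self _)
  refine ⟨g, fun x => hi ?_⟩
  rw [hg]
  change l (c x) - k (q (c x)) = _
  rw [hcq.apply_apply_eq_zero, map_zero, sub_zero, hl]; rfl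

/-- `Ext^1(P,B) = 0` and `Ext^2(M,B) = 0` imply `Ext^1(K,B) = 0`. -/
theorem ext_zero_kernel {K P : Type u} [AddCommGroup K] [Module R K] [AddCommGroup P]
    [Module R P] [Module.Injective R E]
    (i : B →ₗ[R] E) (hi : Function.Injective i) (π : E →ₗ[R] L) (hex : Function.Exact i π)
    (hπ : Function.Surjective π) (c : K →ₗ[R] P)
    (hc : Function.Injective c) (q : P →ₗ[R] M) (hcq : Function.Exact c q)
    (hq : Function.Surjective q) (hP : Subsingleton (extMod R P B 1))
    (hM : Subsingleton (extMod R M L 1)) : Subsingleton (extMod R K B 1) := by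
  refine ext_zero_of_lift i hi π hex fun h => ?_
  obtain ⟨g, hg⟩ := extend_of_ext_zero hM c hc q hcq hq h
  obtain ⟨k, hk⟩ := lift_of_ext_zero hP i hi π hex hπ g
  exact ⟨k ∘ₗ c, fun x => (hk _).trans (hg x)⟩

/-- `Ext^1(K,B) = 0` and `Ext^2(P,B) = 0` imply `Ext^2(M,B) = 0`. -/
theorem ext_zero_cokernel {K P : Type u} [AddCommGroup K] [Module R K] [AddCommGroup P]
    [Module R P] [Module.Injective R E]
    (i : B →ₗ[R] E) (hi : Function.Injective i) (π : E →ₗ[R] L) (hex : Function.Exact i π)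
    (hπ : Function.Surjective π) (c : K →ₗ[R] P)
    (hc : Function.Injective c) (q : P →ₗ[R] M) (hcq : Function.Exact c q)
    (hq : Function.Surjective q) (hK : Subsingleton (extMod R K B 1))
    (hP : Subsingleton (extMod R P L 1)) : Subsingleton (extMod R M L 1) := by
  obtain ⟨E', L', i', π', hE', hi', hex', hπ'⟩ := exists_injective_embedding (R := R) L
  refine ext_zero_of_lift i' hi' π' hex' fun h => ?_
  obtain ⟨l, hl⟩ := lift_of_ext_zero hP i' hi' π' hex' hπ' (h ∘ₗ q)
  have hl' : ∀ x, π' (l x) = h (q x) := hl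
  obtain ⟨f, hf⟩ := corestrict_map i' hi' π' hex' (l ∘ₗ c) (fun x => by
    rw [LinearMap.comp_apply, hl', hcq.apply_apply_eq_zero, map_zero])
  obtain ⟨k, hk⟩ := lift_of_ext_zero hK i hi π hex hπ f
  obtain ⟨g, hg⟩ := Module.Injective.out c hc k
  obtain ⟨t, ht⟩ := descend_map q hq (l - i' ∘ₗ π ∘ₗ g) (fun x hx => by
    obtain ⟨y, rfl⟩ := (hcq x).1 hx
    change l (c y) - i' (π (g (c y))) = 0
    rw [hg, hk, hf]; exact sub_self _)
  refine ⟨t, fun y => ?_⟩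
  obtain ⟨x, rfl⟩ := hq y
  rw [ht]
  change π' (l x - i' (π (g x))) = _
  rw [map_sub, hl', hex'.apply_apply_eq_zero, sub_zero]

theorem fp_of_injective_pi (hR : IsCoherentRing R) : ∀ (n : ℕ) (N : Type u) [AddCommGroup N]
    [Module R N] [Module.Finite R N] (f : N →ₗ[R] (Fin n → R)), Function.Injective f →
    Module.FinitePresentation R N := by
  intro n
  induction n with
  | zero =>
    intro N _ _ _ f hf
    have : Subsingleton N := hf.subsingleton
    exact Module.finitePresentation_of_projective R N
  | succ n ih =>
    intro N _ _ _ f hf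
    let a : N →ₗ[R] R := LinearMap.proj 0 ∘ₗ f
    have hI : Submodule.FG (LinearMap.range a) := Module.Finite.iff_fg.1 inferInstance
    have : Module.FinitePresentation R (LinearMap.range a) := hR _ hI
    have hk := Module.FinitePresentation.fg_ker a.rangeRestrict a.surjective_rangeRestrict
    have : Module.Finite R (LinearMap.ker a.rangeRestrict) := Module.Finite.iff_fg.2 hk
    have : Module.FinitePresentation R (LinearMap.ker a.rangeRestrict) := by
      refine ih _ ((LinearMap.funLeft R R Fin.succ) ∘ₗ f ∘ₗ Submodule.subtype _) ?_
      intro x y hxy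
      apply Subtype.ext
      apply hf
      have hx : f x.1 0 = 0 := congrArg Subtype.val x.2
      have hy : f y.1 0 = 0 := congrArg Subtype.val y.2
      ext j
      refine Fin.cases (hx.trans hy.symm) (fun j => ?_) j
      exact congrFun hxy j
    exact Module.finitePresentation_of_ker a.rangeRestrict a.surjective_rangeRestrict

/-- Over a coherent ring, cosyzygies of absolutely `w`-pure modules are absolutely `w`-pure. -/
theorem absolutelyWPure_cosyzygy (hR : IsCoherentRing R) [Module.Injective R E]
    (i : B →ₗ[R] E) (hi : Function.Injective i) (π : E →ₗ[R] L) (hex : Function.Exact i π)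
    (hπ : Function.Surjective π) (hB : IsAbsolutelyWPure R B) : IsAbsolutelyWPure R L := by
  intro N _ _ hN
  obtain ⟨n, p, hp⟩ := Module.Finite.exists_fin' R N
  have hk := Module.FinitePresentation.fg_ker p hp
  have : Module.Finite R (LinearMap.ker p) := Module.Finite.iff_fg.2 hk
  have hKfp : Module.FinitePresentation R (LinearMap.ker p) :=
    fp_of_injective_pi hR n _ (LinearMap.ker p).subtype (Submodule.injective_subtype _)
  let q : (LinearMap.ker p →₀ R) →ₗ[R] LinearMap.ker p := Finsupp.linearCombination R id
  have hq : Function.Surjective q := Finsupp.linearCombination_id_surjective R _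
  obtain ⟨φ, hφs, hφ⟩ := extMod_one_presentation (A := L) p hp
  obtain ⟨ψ, -, hψ⟩ := extMod_one_presentation (A := B) q hq
  intro z
  obtain ⟨f, rfl⟩ := hφs z
  obtain ⟨l, hl⟩ := Module.projective_lifting_property π (f ∘ₗ q) hπ
  have hl' : ∀ x, π (l x) = f (q x) := fun x => congrArg (fun t => t x) hl
  obtain ⟨m, hm⟩ := corestrict_map (F := LinearMap.ker q) i hi π hex (l ∘ₗ (LinearMap.ker q).subtype) (fun x => by
    change π (l x.1) = 0
    have hx : q x.1 = 0 := x.2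
    rw [hl', hx, map_zero])
  obtain ⟨J, hJ, hJm⟩ := hB (LinearMap.ker p) hKfp (ψ m)
  refine ⟨J, hJ, fun j hj => ?_⟩
  have h0 := hJm j hj
  rw [← map_smul, hψ] at h0
  rw [← map_smul, hφ]
  obtain ⟨g, hg⟩ := h0
  obtain ⟨t, ht⟩ := descend_map q hq (j • l - i ∘ₗ g) (fun x hx => by
    have h1 : g x = j • m ⟨x, hx⟩ := congrArg (fun t => t ⟨x, hx⟩) hg
    have h2 : i (m ⟨x, hx⟩) = l x := hm ⟨x, hx⟩
    change j • l x - i (g x) = 0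
    rw [h1, map_smul, h2, sub_self])
  obtain ⟨s, hs⟩ := Module.Injective.extension_property R E _ _ (LinearMap.ker p).subtype
    (Submodule.injective_subtype _) t
  refine ⟨π ∘ₗ s, ?_⟩
  ext y
  obtain ⟨x, rfl⟩ := hq y
  have h3 : s (q x).1 = t (q x) := congrArg (fun t => t (q x)) hs
  change π (s (q x).1) = j • f (q x)
  rw [h3, ht]
  change π (j • l x - i (g x)) = _
  rw [map_sub, map_smul, hl', hex.apply_apply_eq_zero, sub_zero]

end helpers

/-- `n`-th cosyzygies of absolutely `w`-pure modules. -/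
def IsCosyzygy (R : Type u) [CommRing R] : ℕ → ModuleCat.{u} R → Prop
  | 0, L => IsAbsolutelyWPure R L
  | n + 1, L => ∃ (B E : ModuleCat.{u} R) (i : B →ₗ[R] E) (π : E →ₗ[R] L),
      IsCosyzygy R n B ∧ Module.Injective R E ∧ Function.Injective i ∧ Function.Exact i π ∧
        Function.Surjective π

theorem IsCosyzygy.awp {R : Type u} [CommRing R] (hR : IsCoherentRing R) :
    ∀ (n : ℕ) (L : ModuleCat.{u} R), IsCosyzygy R n L → IsAbsolutelyWPure R L := by
  intro n
  induction n with
  | zero => exact fun L h => h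
  | succ n ih =>
    rintro L ⟨B, E, i, π, hB, hE, hi, hex, hπ⟩
    exact absolutelyWPure_cosyzygy hR i hi π hex hπ (ih B hB)

/-- `Ext^{n+1}(M, A) = 0` for all absolutely `w`-pure `A`. -/
def ExtVanish (R : Type u) [CommRing R] (n : ℕ) (M : Type u) [AddCommGroup M] [Module R M] :
    Prop :=
  ∀ L : ModuleCat.{u} R, IsCosyzygy R n L → Subsingleton (extMod R M L 1)

theorem ExtVanish.cokernel {R : Type u} [CommRing R] (hR : IsCoherentRing R) {n : ℕ}
    {K P M : Type u} [AddCommGroup K] [Module R K] [AddCommGroup P] [Module R P]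
    [AddCommGroup M] [Module R M] (c : K →ₗ[R] P)
    (hc : Function.Injective c) (q : P →ₗ[R] M) (hcq : Function.Exact c q)
    (hq : Function.Surjective q) (hK : ExtVanish R n K) (hP : IsWFPProjective R P) :
    ExtVanish R (n + 1) M := by
  intro L hL
  obtain ⟨B, E, i, π, hB, hE, hi, hex, hπ⟩ := id hL
  exact ext_zero_cokernel i hi π hex hπ c hc q hcq hq (hK B hB) (hP L (hL.awp hR))

theorem ext_zero_of_projective {R : Type u} [CommRing R] (P A : Type u) [AddCommGroup P]
    [Module R P] [AddCommGroup A] [Module R A] [Module.Projective R P] :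
    Subsingleton (extMod R P A 1) := by
  obtain ⟨E, L, i, π, hE, hi, hex, hπ⟩ := exists_injective_embedding (R := R) A
  refine ext_zero_of_lift i hi π hex fun h => ?_
  obtain ⟨k, hk⟩ := Module.projective_lifting_property π h hπ
  exact ⟨k, fun x => congrArg (fun t => t x) hk⟩

theorem ExtVanish.kernel {R : Type u} [CommRing R] {n : ℕ}
    {K P M : Type u} [AddCommGroup K] [Module R K] [AddCommGroup P] [Module R P]
    [AddCommGroup M] [Module R M] (c : K →ₗ[R] P)
    (hc : Function.Injective c) (q : P →ₗ[R] M) (hcq : Function.Exact c q)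
    (hq : Function.Surjective q) (hM : ExtVanish R (n + 1) M) (hP : Module.Projective R P) :
    ExtVanish R n K := by
  intro B hB
  obtain ⟨E, L, i, π, hE, hi, hex, hπ⟩ := exists_injective_embedding (R := R) B
  exact ext_zero_kernel i hi π hex hπ c hc q hcq hq (ext_zero_of_projective P B)
    (hM L ⟨B, E, i, π, hB, hE, hi, hex, hπ⟩)

theorem ExtVanish.of_equiv {R : Type u} [CommRing R] {n : ℕ}
    {K M : Type u} [AddCommGroup K] [Module R K] [AddCommGroup M] [Module R M]
    (e : K ≃ₗ[R] M) (hK : ExtVanish R n K) : ExtVanish R n M := by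
  intro B hB
  obtain ⟨E, L, i, π, hE, hi, hex, hπ⟩ := exists_injective_embedding (R := R) B
  refine ext_zero_of_lift i hi π hex fun h => ?_
  obtain ⟨k, hk⟩ := lift_of_ext_zero (hK B hB) i hi π hex hπ (h ∘ₗ e.toLinearMap)
  refine ⟨k ∘ₗ e.symm.toLinearMap, fun x => ?_⟩
  have := hk (e.symm x)
  simpa using this

theorem exact_corestrict {R : Type u} [CommRing R] {X Y Z W : Type u} [AddCommGroup X]
    [Module R X] [AddCommGroup Y] [Module R Y] [AddCommGroup Z] [Module R Z] [AddCommGroup W]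
    [Module R W] (f : X →ₗ[R] Y) (g : Y →ₗ[R] Z) (h : Z →ₗ[R] W) (hfg : Function.Exact f g)
    (hgh : Function.Exact g h) :
    ∃ g' : Y →ₗ[R] LinearMap.ker h, Function.Surjective g' ∧ Function.Exact f g' := by
  refine ⟨g.codRestrict _ (fun x => hgh.apply_apply_eq_zero x), ?_, ?_⟩
  · rintro ⟨z, hz⟩
    obtain ⟨y, hy⟩ := (hgh z).1 hz
    exact ⟨y, Subtype.ext hy⟩
  · intro y
    rw [← hfg y]
    exact ⟨fun hy => congrArg Subtype.val hy, fun hy => Subtype.ext hy⟩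

theorem bijective_of_subsingleton_exact {R : Type u} [CommRing R] {X Y Z : Type u}
    [AddCommGroup X] [Module R X] [AddCommGroup Y] [Module R Y] [AddCommGroup Z] [Module R Z]
    [Subsingleton X] (f : X →ₗ[R] Y) (g : Y →ₗ[R] Z) (hfg : Function.Exact f g)
    (hg : Function.Surjective g) : Function.Bijective g := by
  refine ⟨(injective_iff_map_eq_zero g).2 fun y hy => ?_, hg⟩
  obtain ⟨x, rfl⟩ := (hfg y).1 hy
  rw [Subsingleton.elim x 0, map_zero]

theorem extVanish_of_resolution {R : Type u} [CommRing R] (hR : IsCoherentRing R) :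
    ∀ (n : ℕ) (M : Type u) [AddCommGroup M] [Module R M]
    (P : ℕ → Type u) [∀ i, AddCommGroup (P i)] [∀ i, Module R (P i)]
    (dP : ∀ i, P (i + 1) →ₗ[R] P i) (εP : P 0 →ₗ[R] M)
    (_ : ∀ i, n < i → Subsingleton (P i))
    (_ : Function.Surjective εP)
    (_ : Function.Exact (dP 0) εP)
    (_ : ∀ i, Function.Exact (dP (i + 1)) (dP i))
    (_ : ∀ i, i ≤ n → IsWFPProjective R (P i)), ExtVanish R n M := by
  intro n
  induction n with
  | zero =>
    intro M _ _ P _ _ dP ε ht hs h0 hex hw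
    have := ht 1 (by omega)
    exact ExtVanish.of_equiv (LinearEquiv.ofBijective ε
      (bijective_of_subsingleton_exact _ ε h0 hs)) (fun L hL => hw 0 le_rfl L hL)
  | succ n ih =>
    intro M _ _ P _ _ dP ε ht hs h0 hex hw
    obtain ⟨d, hd, hdex⟩ := exact_corestrict (dP 1) (dP 0) ε (hex 0) h0
    have := ih (LinearMap.ker ε) (fun i => P (i + 1)) (fun i => dP (i + 1)) d
      (fun i hi => ht _ (by omega)) hd hdex (fun i => hex (i + 1)) (fun i hi => hw _ (by omega))
    exact ExtVanish.cokernel hR (LinearMap.ker ε).subtype (Submodule.injective_subtype _) ε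
      (LinearMap.exact_subtype_ker_map ε) hs this (hw 0 (by omega))

theorem extVanish_syzygy {R : Type u} [CommRing R] :
    ∀ (n : ℕ) (M : Type u) [AddCommGroup M] [Module R M]
    (Q : ℕ → Type u) [∀ i, AddCommGroup (Q i)] [∀ i, Module R (Q i)]
    (dQ : ∀ i, Q (i + 1) →ₗ[R] Q i) (εQ : Q 0 →ₗ[R] M)
    (_ : ∀ i, n < i → Subsingleton (Q i))
    (_ : Function.Surjective εQ)
    (_ : Function.Exact (dQ 0) εQ)
    (_ : ∀ i, Function.Exact (dQ (i + 1)) (dQ i))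
    (_ : ∀ i, i < n → Module.Projective R (Q i)), ExtVanish R n M → ExtVanish R 0 (Q n) := by
  intro n
  induction n with
  | zero =>
    intro M _ _ Q _ _ dQ ε ht hs h0 hex hw hM
    have := ht 1 (by omega)
    exact ExtVanish.of_equiv (LinearEquiv.ofBijective ε
      (bijective_of_subsingleton_exact _ ε h0 hs)).symm hM
  | succ n ih =>
    intro M _ _ Q _ _ dQ ε ht hs h0 hex hw hM
    obtain ⟨d, hd, hdex⟩ := exact_corestrict (dQ 1) (dQ 0) ε (hex 0) h0
    exact ih (LinearMap.ker ε) (fun i => Q (i + 1)) (fun i => dQ (i + 1)) d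
      (fun i hi => ht _ (by omega)) hd hdex (fun i => hex (i + 1)) (fun i hi => hw _ (by omega))
      (ExtVanish.kernel (LinearMap.ker ε).subtype (Submodule.injective_subtype _) ε
      (LinearMap.exact_subtype_ker_map ε) hs hM (hw 0 (by omega)))

/-- Over a coherent ring, if `M` admits an exact sequence
`0 → P_n → ⋯ → P_0 → M → 0` with each `P_i` `w`-FP-projective, then for every exact
sequence `0 → Q_n → ⋯ → Q_0 → M → 0` with `Q_0, …, Q_{n-1}` projective, `Q_n` is
`w`-FP-projective. (Sequences are encoded as ℕ-indexed resolutions vanishing beyond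
degree `n`.) -/
theorem wFPProjective_syzygy (R : Type u) [CommRing R] (hR : IsCoherentRing R) (n : ℕ)
    (M : Type u) [AddCommGroup M] [Module R M]
    (P : ℕ → Type u) [∀ i, AddCommGroup (P i)] [∀ i, Module R (P i)]
    (dP : ∀ i, P (i + 1) →ₗ[R] P i) (εP : P 0 →ₗ[R] M)
    (hPtriv : ∀ i, n < i → Subsingleton (P i))
    (hPsurj : Function.Surjective εP)
    (hPex0 : Function.Exact (dP 0) εP)
    (hPex : ∀ i, Function.Exact (dP (i + 1)) (dP i))
    (hPwfp : ∀ i, i ≤ n → IsWFPProjective R (P i))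
    (Q : ℕ → Type u) [∀ i, AddCommGroup (Q i)] [∀ i, Module R (Q i)]
    (dQ : ∀ i, Q (i + 1) →ₗ[R] Q i) (εQ : Q 0 →ₗ[R] M)
    (hQtriv : ∀ i, n < i → Subsingleton (Q i))
    (hQsurj : Function.Surjective εQ)
    (hQex0 : Function.Exact (dQ 0) εQ)
    (hQex : ∀ i, Function.Exact (dQ (i + 1)) (dQ i))
    (hQproj : ∀ i, i < n → Module.Projective R (Q i)) :
    IsWFPProjective R (Q n) := by
  have h1 := extVanish_of_resolution hR n M P dP εP hPtriv hPsurj hPex0 hPex hPwfp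
  have h2 := extVanish_syzygy n M Q dQ εQ hQtriv hQsurj hQex0 hQex hQproj h1
  intro A _ _ hA
  exact h2 (ModuleCat.of R A) hA
end

section
/- Let R be a coherent ring and 0 → M'' → M' → M → 0 an exact sequence of R-modules with M' w-FP-projective and w-fpd_R(M) > 0. Then w-fpd_R(M) = w-fpd_R(M'') + 1. -/
open CategoryTheory

universe u

/-- The `w`-FP-projective dimension of `M`: the least `n` such that
`Ext^{n+1}_R(M, A) = 0` for every absolutely `w`-pure module `A` (`⊤ = ∞` if none). -/
noncomputable def wFPProjDim (R : Type u) [CommRing R]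
    (M : Type u) [AddCommGroup M] [Module R M] : ℕ∞ :=
  sInf {n : ℕ∞ | ∃ k : ℕ, n = k ∧
    ∀ (A : Type u) [AddCommGroup A] [Module R A], IsAbsolutelyWPure R A →
      Subsingleton (extMod R M A (k + 1))}

/-- The legacy Ext group through a projective resolution. -/
lemma legacy_ext_cocycle (R : Type u) [CommRing R] {X : ModuleCat.{u} R}
    (P : ProjectiveResolution X) (Y : ModuleCat.{u} R) (n : ℕ) :
    ∃ c : {f : P.complex.X (n + 1) ⟶ Y // P.complex.d (n + 2) (n + 1) ≫ f = 0} →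
      (((_root_.Ext R (ModuleCat R) (n + 1)).obj (Opposite.op X)).obj Y : ModuleCat R),
      Function.Surjective c ∧ ∀ (r : R) f, r • c f = 0 ↔
        ∃ g : P.complex.X n ⟶ Y, P.complex.d (n + 1) n ≫ g = r • f.1 := by
  let K := P.complex.linearYonedaObj R Y
  let S := K.sc' n (n + 1) (n + 2)
  let e : (((_root_.Ext R (ModuleCat R) (n + 1)).obj (Opposite.op X)).obj Y : ModuleCat R) ≅
      S.moduleCatLeftHomologyData.H :=
    P.isoExt (R := R) (n + 1) Y ≪≫
      ShortComplex.homologyMapIso (K.isoSc' n (n + 1) (n + 2) (by simp) (by simp)) ≪≫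
      S.moduleCatHomologyIso
  let E : (((_root_.Ext R (ModuleCat R) (n + 1)).obj (Opposite.op X)).obj Y : ModuleCat R) ≃ₗ[R]
      (LinearMap.ker S.g.hom ⧸ LinearMap.range S.moduleCatToCycles) := e.toLinearEquiv
  let q : LinearMap.ker S.g.hom →ₗ[R]
    (LinearMap.ker S.g.hom ⧸ LinearMap.range S.moduleCatToCycles) :=
    (LinearMap.range S.moduleCatToCycles).mkQ
  let c : {f : P.complex.X (n + 1) ⟶ Y // P.complex.d (n + 2) (n + 1) ≫ f = 0} →
      LinearMap.ker S.g.hom := fun f => ⟨f.1, f.2⟩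
  refine ⟨fun f => E.symm (q (c f)), ?_, ?_⟩
  · intro x
    obtain ⟨z, hz⟩ := Submodule.mkQ_surjective _ (E x)
    refine ⟨⟨z.1, z.2⟩, ?_⟩
    exact (LinearEquiv.symm_apply_eq E).2 hz
  · intro r f
    have h1 : r • E.symm (q (c f)) = 0 ↔ q (r • c f) = 0 := by
      rw [← map_smul E.symm, map_smul q]
      exact E.symm.map_eq_zero_iff
    refine h1.trans ?_
    refine (Submodule.Quotient.mk_eq_zero _).trans ?_
    constructor
    · rintro ⟨g, hg⟩
      exact ⟨g, congrArg Subtype.val hg⟩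
    · rintro ⟨g, hg⟩
      exact ⟨g, Subtype.ext hg⟩

lemma new_ext_cocycle (R : Type u) [CommRing R] {X : ModuleCat.{u} R}
    (P : ProjectiveResolution X) (Y : ModuleCat.{u} R) (n : ℕ) :
    ∃ c : {f : P.complex.X (n + 1) ⟶ Y // P.complex.d (n + 2) (n + 1) ≫ f = 0} →
      Abelian.Ext.{u} X Y (n + 1),
      Function.Surjective c ∧ ∀ (r : R) f, r • c f = 0 ↔
        ∃ g : P.complex.X n ⟶ Y, P.complex.d (n + 1) n ≫ g = r • f.1 := by
  refine ⟨fun f => P.extMk f.1 (n + 2) rfl f.2, ?_, ?_⟩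
  · intro x
    obtain ⟨f, hf, h⟩ := P.extMk_surjective x (n + 2) rfl
    exact ⟨⟨f, hf⟩, h⟩
  · intro r f
    rw [Abelian.Ext.smul_eq_comp_mk₀, P.extMk_comp_mk₀, P.extMk_eq_zero_iff _ _ _ _ n rfl]
    simp

/-- comparison of annihilation in the two Ext groups -/
lemma ext_compare (R : Type u) [CommRing R] (M N : Type u) [AddCommGroup M] [Module R M]
    [AddCommGroup N] [Module R N] (n : ℕ) (Q : Set R → Prop) :
    (∀ x : extMod R M N (n + 1), Q {r | r • x = 0}) ↔
    (∀ x : Abelian.Ext.{u} (ModuleCat.of R M) (ModuleCat.of R N) (n + 1), Q {r | r • x = 0}) := by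
  let P := projectiveResolution (ModuleCat.of R M)
  obtain ⟨c, hc, hc'⟩ := legacy_ext_cocycle R P (ModuleCat.of R N) n
  obtain ⟨d, hd, hd'⟩ := new_ext_cocycle R P (ModuleCat.of R N) n
  have h : ∀ f, {r : R | r • c f = 0} = {r : R | r • d f = 0} := by
    intro f; ext r; simp only [Set.mem_setOf_eq]; rw [hc', hd']
  refine (hc.forall (p := fun x => Q {r : R | r • x = 0})).trans
    (Iff.trans ?_ (hd.forall (p := fun x => Q {r : R | r • x = 0})).symm)
  simp only [h]

lemma subsingleton_compare (R : Type u) [CommRing R] (M N : Type u) [AddCommGroup M] [Module R M]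
    [AddCommGroup N] [Module R N] (n : ℕ) :
    Subsingleton (extMod R M N (n + 1)) ↔
    Subsingleton (Abelian.Ext.{u} (ModuleCat.of R M) (ModuleCat.of R N) (n + 1)) := by
  have h := ext_compare R M N n (fun s => (1 : R) ∈ s)
  simp only [Set.mem_setOf_eq, one_smul] at h
  exact ⟨fun _ => subsingleton_of_forall_eq 0 (h.1 fun x => Subsingleton.elim _ _),
    fun _ => subsingleton_of_forall_eq 0 (h.2 fun x => Subsingleton.elim _ _)⟩

lemma torsion_compare (R : Type u) [CommRing R] (M N : Type u) [AddCommGroup M] [Module R M]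
    [AddCommGroup N] [Module R N] (n : ℕ) :
    IsGVTorsion R (extMod R M N (n + 1)) ↔
    IsGVTorsion R (Abelian.Ext.{u} (ModuleCat.of R M) (ModuleCat.of R N) (n + 1)) :=
  ext_compare R M N n (fun s => ∃ J : Ideal R, IsGVIdeal R J ∧ ∀ j ∈ J, j ∈ s)

/-- Finitely generated submodules of finite free modules over a coherent ring. -/
lemma fp_of_fg_submodule (R : Type u) [CommRing R] (hR : IsCoherentRing R) (n : ℕ)
    (K : Type u) [AddCommGroup K] [Module R K] [Module.Finite R K]
    (i : K →ₗ[R] (Fin n → R)) (hi : Function.Injective i) : Module.FinitePresentation R K := by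
  induction n generalizing K with
  | zero =>
    have : Subsingleton K := hi.subsingleton
    infer_instance
  | succ n ih =>
    let l : K →ₗ[R] R := (LinearMap.proj 0).comp i
    have : Module.FinitePresentation R (LinearMap.range l) :=
      hR _ (Module.Finite.iff_fg.1 inferInstance)
    have hfg := Module.FinitePresentation.fg_ker l.rangeRestrict l.surjective_rangeRestrict
    have : Module.Finite R (LinearMap.ker l.rangeRestrict) := Module.Finite.iff_fg.2 hfg
    have : Module.FinitePresentation R (LinearMap.ker l.rangeRestrict) := by
      refine ih _ ((LinearMap.funLeft R R Fin.succ).comp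
        (i.comp (LinearMap.ker l.rangeRestrict).subtype)) ?_
      rw [injective_iff_map_eq_zero]
      rintro ⟨x, hx⟩ h
      have hx0 : i x 0 = 0 := congrArg Subtype.val (LinearMap.mem_ker.1 hx)
      apply Subtype.ext
      apply hi
      refine Eq.trans ?_ (map_zero i).symm
      funext k
      refine Fin.cases hx0 (fun k => ?_) k
      exact congrFun h k
    exact Module.finitePresentation_of_ker l.rangeRestrict l.surjective_rangeRestrict

/-- embed A in an injective with absolutely w-pure cokernel -/
lemma exists_cosyzygy (R : Type u) [CommRing R] (hR : IsCoherentRing R)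
    (A : Type u) [AddCommGroup A] [Module R A] (hA : IsAbsolutelyWPure R A) :
    ∃ (S : ShortComplex (ModuleCat.{u} R)), S.X₁ = ModuleCat.of R A ∧ Injective S.X₂ ∧
      S.ShortExact ∧ IsAbsolutelyWPure R S.X₃ := by
  let ι := Injective.ι (ModuleCat.of R A)
  let S := ShortComplex.mk ι (Limits.cokernel.π ι) (by simp)
  have hS : S.ShortExact := ShortComplex.ShortExact.mk
    (ShortComplex.exact_of_g_is_cokernel _ (Limits.cokernelIsCokernel ι))
  have hinj : Injective S.X₂ := inferInstanceAs (Injective (Injective.under _))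
  refine ⟨S, rfl, hinj, hS, ?_⟩
  intro N _ _ hN
  obtain ⟨n, m, f, g, hf, hfg⟩ := Module.FinitePresentation.exists_fin' R N
  have hfin : Module.Finite R (LinearMap.ker f) :=
    Module.Finite.iff_fg.2 (Module.FinitePresentation.fg_ker f hf)
  have hK : Module.FinitePresentation R (LinearMap.ker f) :=
    fp_of_fg_submodule R hR n _ (LinearMap.ker f).subtype Subtype.val_injective
  have hT := LinearMap.shortExact_shortComplexKer hf
  have hKA := (torsion_compare R _ A 0).1 (hA (LinearMap.ker f) hK)
  refine (torsion_compare R N S.X₃ 0).2 ?_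
  intro x
  have hproj : Projective f.shortComplexKer.X₂ :=
    (IsProjective.iff_projective (R := R) (Fin n → R)).1 inferInstance
  obtain ⟨y, hy⟩ := Abelian.Ext.contravariant_sequence_exact₃ hT _
    (x.comp hS.extClass (rfl : 1 + 1 = 2)) (Abelian.Ext.eq_zero_of_projective _) (n₀ := 1) rfl
  obtain ⟨J, hJ, hj⟩ := hKA y
  refine ⟨J, hJ, fun j hjJ => ?_⟩
  have h0 : (j • x).comp hS.extClass (rfl : 1 + 1 = 2) = 0 := by
    rw [Abelian.Ext.smul_comp]
    refine (congrArg (j • ·) hy.symm).trans ?_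
    dsimp only
    rw [← Abelian.Ext.comp_smul]
    refine (congrArg (fun z => hT.extClass.comp z rfl) (hj j hjJ)).trans ?_
    simp
  obtain ⟨z, hz⟩ := Abelian.Ext.covariant_sequence_exact₃ _ hS (j • x) rfl h0
  rw [← hz, Abelian.Ext.eq_zero_of_injective z]
  simp

lemma higher_vanish (R : Type u) [CommRing R] (hR : IsCoherentRing R)
    (M : Type u) [AddCommGroup M] [Module R M] (hM : IsWFPProjective R M) (n : ℕ)
    (A : Type u) [AddCommGroup A] [Module R A] (hA : IsAbsolutelyWPure R A) :
    Subsingleton (Abelian.Ext.{u} (ModuleCat.of R M) (ModuleCat.of R A) (n + 1)) := by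
  induction n generalizing A with
  | zero => exact (subsingleton_compare R M A 0).1 (hM A hA)
  | succ n ih =>
    obtain ⟨S, h1, h2, hS, h3⟩ := exists_cosyzygy R hR A hA
    have := ih S.X₃ h3
    rw [← h1]
    refine subsingleton_of_forall_eq 0 fun x => ?_
    obtain ⟨z, hz⟩ := Abelian.Ext.covariant_sequence_exact₁ _ hS x
      (Abelian.Ext.eq_zero_of_injective _) rfl
    rw [← hz, Subsingleton.elim z 0]
    simp

/-- Over a coherent ring, given `0 → M'' → M' → M → 0` exact with `M'`
`w`-FP-projective and `w-fpd(M) > 0`, one has `w-fpd(M) = w-fpd(M'') + 1`. -/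
theorem wFPProjDim_eq_succ (R : Type u) [CommRing R] (hR : IsCoherentRing R)
    (M'' M' M : Type u) [AddCommGroup M''] [Module R M''] [AddCommGroup M'] [Module R M']
    [AddCommGroup M] [Module R M]
    (f : M'' →ₗ[R] M') (g : M' →ₗ[R] M) (hf : Function.Injective f)
    (hg : Function.Surjective g) (hfg : Function.Exact f g)
    (hM' : IsWFPProjective R M') (hM : 0 < wFPProjDim R M) :
    wFPProjDim R M = wFPProjDim R M'' + 1 := by
  have key : ∀ (k : ℕ) (A : Type u) [AddCommGroup A] [Module R A], IsAbsolutelyWPure R A →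
      (Subsingleton (extMod R M A (k + 1 + 1)) ↔ Subsingleton (extMod R M'' A (k + 1))) := by
    intro k A _ _ hA
    rw [subsingleton_compare, subsingleton_compare]
    have hv1 := higher_vanish R hR M' hM' k A hA
    have hv2 := higher_vanish R hR M' hM' (k + 1) A hA
    let S : ShortComplex (ModuleCat.{u} R) :=
      ModuleCat.shortComplexOfCompEqZero f g hfg.linearMap_comp_eq_zero
    have hS : S.ShortExact := ModuleCat.shortComplex_shortExact S hfg hf hg
    constructor
    · intro _
      refine subsingleton_of_forall_eq 0 fun x => ?_
      obtain ⟨z, hz⟩ := Abelian.Ext.contravariant_sequence_exact₁ hS (ModuleCat.of R A) x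
        (n₁ := k + 1 + 1) (by omega) (Subsingleton.elim (α := Abelian.Ext.{u} (ModuleCat.of R M)
          (ModuleCat.of R A) (k + 1 + 1)) _ _)
      have hz0 : z = 0 := hv1.elim _ _
      rw [← hz, hz0]
      simp
    · intro h
      refine subsingleton_of_forall_eq 0 fun x => ?_
      obtain ⟨z, hz⟩ := Abelian.Ext.contravariant_sequence_exact₃ hS (ModuleCat.of R A) x
        (hv2.elim _ _) (n₀ := k + 1) (by omega)
      have hz0 : z = 0 := h.elim _ _
      rw [← hz, hz0]
      simp
  apply le_antisymm
  · by_cases htop : wFPProjDim R M'' = ⊤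
    · rw [htop]; simp
    · have hne : {n : ℕ∞ | ∃ k : ℕ, n = k ∧
          ∀ (A : Type u) [AddCommGroup A] [Module R A], IsAbsolutelyWPure R A →
          Subsingleton (extMod R M'' A (k + 1))}.Nonempty := by
        rw [Set.nonempty_iff_ne_empty]
        intro h
        apply htop
        rw [wFPProjDim, h, sInf_empty]
      obtain ⟨k, hk, hk'⟩ := csInf_mem hne
      have hk2 : wFPProjDim R M'' = k := hk
      rw [hk2]
      exact sInf_le ⟨k + 1, by push_cast; rfl, fun A _ _ hA => (key k A hA).2 (hk' A hA)⟩
  · refine le_sInf ?_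
    rintro _ ⟨k, rfl, hk⟩
    cases k with
    | zero =>
      exfalso
      refine absurd hM (not_lt.2 ?_)
      exact sInf_le ⟨0, rfl, hk⟩
    | succ k =>
      push_cast
      gcongr
      exact sInf_le ⟨k, rfl, fun A _ _ hA => (key k A hA).1 (hk A hA)⟩
end

section
/- For a commutative ring R, the following are equivalent: (1) every R-module is w-FP-projective; (2) every absolutely w-pure R-module is injective; (3) R is a Noetherian DW-ring. -/
open CategoryTheory

universe u

lemma sc_killed_iff {R : Type u} [CommRing R] (S : ShortComplex (ModuleCat.{u} R)) (r : R) :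
    (∀ x : S.homology, r • x = 0) ↔
      ∀ y : S.X₂, S.g.hom y = 0 → ∃ z : S.X₁, S.f.hom z = r • y := by
  let e := S.moduleCatHomologyIso.toLinearEquiv
  have h1 : (∀ x : S.homology, r • x = 0) ↔
      ∀ x : S.moduleCatLeftHomologyData.H, r • x = 0 := by
    constructor
    · intro h x
      apply e.symm.injective
      rw [map_smul, h, map_zero]
    · intro h x
      apply e.injective
      rw [map_smul, h, map_zero]
  rw [h1]
  change (∀ x : (LinearMap.ker S.g.hom ⧸ LinearMap.range S.moduleCatToCycles), r • x = 0) ↔ _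
  constructor
  · intro h y hy
    have := h (Submodule.Quotient.mk ⟨y, hy⟩)
    rw [← Submodule.Quotient.mk_smul, Submodule.Quotient.mk_eq_zero] at this
    obtain ⟨z, hz⟩ := this
    exact ⟨z, congrArg Subtype.val hz⟩
  · intro h x
    obtain ⟨⟨y, hy⟩, rfl⟩ := Submodule.Quotient.mk_surjective _ x
    rw [← Submodule.Quotient.mk_smul, Submodule.Quotient.mk_eq_zero]
    obtain ⟨z, hz⟩ := h y hy
    exact ⟨z, Subtype.ext hz⟩

/-- Killing of `Ext^1` in terms of a projective resolution. -/
lemma ext_killed_iff_res {R : Type u} [CommRing R] (M A : Type u) [AddCommGroup M] [Module R M]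
    [AddCommGroup A] [Module R A] (Q : ProjectiveResolution (ModuleCat.of R M)) (r : R) :
    (∀ x : extMod R M A 1, r • x = 0) ↔
      ∀ y : Q.complex.X 1 ⟶ ModuleCat.of R A, Q.complex.d 2 1 ≫ y = 0 →
        ∃ z : Q.complex.X 0 ⟶ ModuleCat.of R A, Q.complex.d 1 0 ≫ z = r • y := by
  let K := Q.complex.linearYonedaObj R (ModuleCat.of R A)
  let i : extMod R M A 1 ≅ (K.sc' 0 1 2).homology :=
    Q.isoExt 1 (ModuleCat.of R A) ≪≫
      ShortComplex.homologyMapIso (K.isoSc' 0 1 2 (by simp) (by simp))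
  let e := i.toLinearEquiv
  have h1 : (∀ x : extMod R M A 1, r • x = 0) ↔
      ∀ x : (K.sc' 0 1 2).homology, r • x = 0 := by
    constructor
    · intro h x
      apply e.symm.injective
      rw [map_smul, h, map_zero]
    · intro h x
      apply e.injective
      rw [map_smul, h, map_zero]
  rw [h1, sc_killed_iff]
  rfl

/-- Killing of `Ext^1` via some short exact sequence. -/
lemma ext_killed_iff_exists {R : Type u} [CommRing R] (M A : Type u) [AddCommGroup M] [Module R M]
    [AddCommGroup A] [Module R A] (r : R) :
    ∃ (P : Type u) (_ : AddCommGroup P) (_ : Module R P) (p : P →ₗ[R] M),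
      Module.Projective R P ∧ Function.Surjective p ∧
      ((∀ x : extMod R M A 1, r • x = 0) ↔
        ∀ f : LinearMap.ker p →ₗ[R] A, ∃ h : P →ₗ[R] A, ∀ x : LinearMap.ker p, h x = r • f x) := by
  let Q := projectiveResolution (ModuleCat.of R M)
  have hproj := Q.projective 0
  let p : Q.complex.X 0 →ₗ[R] M := (Q.π.f 0).hom
  have hex : ∀ x, p x = 0 → ∃ w, (Q.complex.d 1 0).hom w = x :=
    (ShortComplex.moduleCat_exact_iff _).1 Q.exact₀
  have hex2 : ∀ x, (Q.complex.d 1 0).hom x = 0 → ∃ w, (Q.complex.d 2 1).hom w = x :=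
    (ShortComplex.moduleCat_exact_iff _).1 (Q.exact_succ 0)
  have hd : ∀ w, p ((Q.complex.d 1 0).hom w) = 0 := fun w =>
    LinearMap.congr_fun (congrArg ModuleCat.Hom.hom Q.complex_d_comp_π_f_zero) w
  have hdd : ∀ w, (Q.complex.d 1 0).hom ((Q.complex.d 2 1).hom w) = 0 := fun w =>
    LinearMap.congr_fun (congrArg ModuleCat.Hom.hom (Q.complex.d_comp_d 2 1 0)) w
  let d' : Q.complex.X 1 →ₗ[R] LinearMap.ker p :=
    LinearMap.codRestrict _ (Q.complex.d 1 0).hom hd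
  have hd's : Function.Surjective d' := by
    rintro ⟨x, hx⟩
    obtain ⟨w, hw⟩ := hex x hx
    exact ⟨w, Subtype.ext hw⟩
  refine ⟨Q.complex.X 0, inferInstance, inferInstance, p,
    (IsProjective.iff_projective _).2 hproj, ?_, ?_⟩
  · exact (ModuleCat.epi_iff_surjective (Q.π.f 0)).1 inferInstance
  rw [ext_killed_iff_res M A Q]
  constructor
  · intro h f
    obtain ⟨z, hz⟩ := h (ModuleCat.ofHom (f ∘ₗ d')) (by
      ext w
      change f (d' _) = 0
      have : d' ((Q.complex.d 2 1).hom w) = 0 := Subtype.ext (hdd w)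
      erw [this]; simp)
    refine ⟨z.hom, fun x => ?_⟩
    obtain ⟨w, rfl⟩ := hd's x
    exact LinearMap.congr_fun (congrArg ModuleCat.Hom.hom hz) w
  · intro h y hy
    have hker : LinearMap.ker d' ≤ LinearMap.ker y.hom := by
      intro w hw
      obtain ⟨v, rfl⟩ := hex2 w (congrArg Subtype.val hw)
      exact LinearMap.congr_fun (congrArg ModuleCat.Hom.hom hy) v
    let e := d'.quotKerEquivOfSurjective hd's
    let f : LinearMap.ker p →ₗ[R] A := (LinearMap.ker d').liftQ y.hom hker ∘ₗ e.symm.toLinearMap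
    have hf : ∀ w, f (d' w) = y.hom w := by
      intro w
      have : e.symm (d' w) = Submodule.Quotient.mk w := by
        rw [LinearEquiv.symm_apply_eq]; rfl
      change (LinearMap.ker d').liftQ y.hom hker (e.symm (d' w)) = _
      rw [this]; rfl
    obtain ⟨g, hg⟩ := h f
    refine ⟨ModuleCat.ofHom g, ?_⟩
    ext w
    have := hg (d' w)
    rw [hf] at this
    exact this

/-- Killing of `Ext^1` via any projective presentation. -/
lemma ext_killed_iff {R : Type u} [CommRing R] (M A : Type u) [AddCommGroup M] [Module R M]
    [AddCommGroup A] [Module R A] (r : R)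
    {P : Type u} [AddCommGroup P] [Module R P] [Module.Projective R P] (p : P →ₗ[R] M)
    (hp : Function.Surjective p) :
    (∀ x : extMod R M A 1, r • x = 0) ↔
      ∀ f : LinearMap.ker p →ₗ[R] A, ∃ h : P →ₗ[R] A, ∀ x : LinearMap.ker p, h x = r • f x := by
  have key : ∀ (P P' : Type u) [AddCommGroup P] [Module R P] [AddCommGroup P'] [Module R P']
      [Module.Projective R P] [Module.Projective R P'] (p : P →ₗ[R] M) (p' : P' →ₗ[R] M),
      Function.Surjective p → Function.Surjective p' →
      (∀ f : LinearMap.ker p' →ₗ[R] A, ∃ h : P' →ₗ[R] A,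
        ∀ x : LinearMap.ker p', h x = r • f x) →
      ∀ f : LinearMap.ker p →ₗ[R] A, ∃ h : P →ₗ[R] A,
        ∀ x : LinearMap.ker p, h x = r • f x := by
    intro P P' _ _ _ _ _ _ p p' hp hp' H f
    obtain ⟨g, hg⟩ := Module.projective_lifting_property p p' hp
    obtain ⟨k, hk⟩ := Module.projective_lifting_property p' p hp'
    have hg' : ∀ x, p (g x) = p' x := LinearMap.congr_fun hg
    have hk' : ∀ x, p' (k x) = p x := LinearMap.congr_fun hk
    let g' : LinearMap.ker p' →ₗ[R] LinearMap.ker p :=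
      LinearMap.restrict g (fun x hx => by
        simp only [LinearMap.mem_ker] at hx ⊢; rw [hg', hx])
    obtain ⟨h, hh⟩ := H (f ∘ₗ g')
    let s : P →ₗ[R] LinearMap.ker p := LinearMap.codRestrict _ (LinearMap.id - g ∘ₗ k) (fun x => by
      simp [hg', hk'])
    refine ⟨h ∘ₗ k + r • (f ∘ₗ s), fun x => ?_⟩
    have hkx : k x ∈ LinearMap.ker p' := by
      rw [LinearMap.mem_ker, hk']; exact x.2
    have h1 := hh ⟨k x, hkx⟩
    have h2 : g' ⟨k x, hkx⟩ + s x = x := by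
      apply Subtype.ext
      change g (k x) + (x - g (k x)) = x
      abel
    simp only [LinearMap.add_apply, LinearMap.comp_apply, LinearMap.smul_apply] at h1 ⊢
    rw [h1, ← smul_add, ← map_add, h2]
  obtain ⟨P', _, _, p', hP', hp', hiff⟩ := ext_killed_iff_exists M A r
  rw [hiff]
  exact ⟨key P P' p p' hp hp', key P' P p' p hp' hp⟩

lemma ext_subsingleton_iff {R : Type u} [CommRing R] (M A : Type u) [AddCommGroup M] [Module R M]
    [AddCommGroup A] [Module R A] :
    Subsingleton (extMod R M A 1) ↔ ∀ x : extMod R M A 1, (1 : R) • x = 0 := by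
  simp only [one_smul]
  exact ⟨fun h x => Subsingleton.elim _ _, fun h => ⟨fun a b => by rw [h a, h b]⟩⟩

lemma inj_of_ext {R : Type u} [CommRing R] (A : Type u)
    [AddCommGroup A] [Module R A]
    (h : ∀ I : Ideal R, Subsingleton (extMod R (R ⧸ I) A 1)) : Module.Injective R A := by
  apply Module.Baer.injective
  intro I g
  have h1 := (ext_killed_iff (R ⧸ I) A (1 : R) I.mkQ I.mkQ_surjective).1
    ((ext_subsingleton_iff _ _).1 (h I))
  have hI : LinearMap.ker (I.mkQ) = I := I.ker_mkQ
  obtain ⟨k, hk⟩ := h1 (g ∘ₗ (LinearEquiv.ofEq _ _ hI).toLinearMap)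
  refine ⟨k, fun x hx => ?_⟩
  have := hk ⟨x, by rw [hI]; exact hx⟩
  rw [one_smul] at this
  exact this

lemma ext_of_inj {R : Type u} [CommRing R] (M A : Type u) [AddCommGroup M] [Module R M]
    [AddCommGroup A] [Module R A] (h : Module.Injective R A) :
    Subsingleton (extMod R M A 1) := by
  rw [ext_subsingleton_iff,
    ext_killed_iff M A (1 : R) (Finsupp.linearCombination R (id : M → M))
      (Finsupp.linearCombination_surjective R Function.surjective_id)]
  intro f
  obtain ⟨k, hk⟩ := h.out (LinearMap.ker _).subtype (Submodule.injective_subtype _) f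
  exact ⟨k, fun x => by rw [one_smul]; exact hk x⟩

lemma gv_top {R : Type u} [CommRing R] : IsGVIdeal R ⊤ := by
  refine ⟨⟨{1}, by simp⟩, ?_, ?_⟩
  · intro a b hab
    have := LinearMap.congr_fun hab ⟨1, trivial⟩
    simpa using this
  · intro f
    refine ⟨f ⟨1, trivial⟩, ?_⟩
    ext ⟨x, hx⟩
    have : (⟨x, hx⟩ : (⊤ : Ideal R)) = x • ⟨1, trivial⟩ := Subtype.ext (by simp)
    rw [this, map_smul]
    simp [mul_comm]

lemma gv_eq_top_of_dw {R : Type u} [CommRing R] (h : IsDWRing R) (J : Ideal R)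
    (hJ : IsGVIdeal R J) : J = ⊤ := by
  by_contra hne
  obtain ⟨m, hm, hle⟩ := Ideal.exists_le_maximal J hne
  exact hm.ne_top ((Ideal.eq_top_iff_one m).2 (h m hm 1 J hJ (fun j hj => by
    rw [mul_one]; exact hle hj)))

lemma wpure_of_killed {R : Type u} [CommRing R] (A : Type u)
    [AddCommGroup A] [Module R A] (J : Ideal R) (hJ : IsGVIdeal R J)
    (h : ∀ j ∈ J, ∀ a : A, j • a = 0) : IsAbsolutelyWPure R A := by
  intro N _ _ _ x
  refine ⟨J, hJ, fun j hj => ?_⟩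
  refine (ext_killed_iff N A j (Finsupp.linearCombination R (id : N → N))
      (Finsupp.linearCombination_surjective R Function.surjective_id)).2 ?_ x
  intro f
  exact ⟨0, fun x => by rw [h j hj]; rfl⟩

/-- FP-injective modules are absolutely w-pure. -/
lemma wpure_of_fp {R : Type u} [CommRing R] (A : Type u)
    [AddCommGroup A] [Module R A]
    (h : ∀ (P : Type u) [AddCommGroup P] [Module R P] (K : Submodule R P), K.FG →
      ∀ f : K →ₗ[R] A, ∃ g : P →ₗ[R] A, ∀ x : K, g x = f x) : IsAbsolutelyWPure R A := by
  intro N _ _ hN x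
  refine ⟨⊤, gv_top, fun j hj => ?_⟩
  have hfin : Module.Finite R N := inferInstance
  obtain ⟨n, p, hp⟩ := Module.Finite.exists_fin' R N
  let q : (ULift.{u} (Fin n) → R) →ₗ[R] N :=
    p ∘ₗ (LinearEquiv.funCongrLeft R R Equiv.ulift.symm).toLinearMap
  have hq : Function.Surjective q := hp.comp (LinearEquiv.surjective _)
  have hk : (LinearMap.ker q).FG := Module.FinitePresentation.fg_ker q hq
  refine (ext_killed_iff N A j q hq).2 ?_ x
  intro f
  obtain ⟨g, hg⟩ := h _ _ hk f
  exact ⟨j • g, fun x => by rw [← hg]; rfl⟩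

lemma dw_of {R : Type u} [CommRing R]
    (H : ∀ (A : Type u) [AddCommGroup A] [Module R A], IsAbsolutelyWPure R A →
        Module.Injective R A) : IsDWRing R := by
  intro m hm x J hJ hx
  suffices J = ⊤ by
    have := hx 1 (by rw [this]; trivial)
    rwa [one_mul] at this
  let B := R ⧸ (J * J)
  let C : Submodule R B := Submodule.map (J * J).mkQ J
  have hC : ∀ j ∈ J, ∀ a : C, j • a = 0 := by
    rintro j hj ⟨_, ⟨y, hy, rfl⟩⟩
    apply Subtype.ext
    change j • (J * J).mkQ y = 0
    rw [← map_smul, Submodule.mkQ_apply, Submodule.Quotient.mk_eq_zero]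
    exact Ideal.mul_mem_mul hj hy
  have hinj := H C (wpure_of_killed C J hJ hC)
  let f : J →ₗ[R] C := LinearMap.restrict (J * J).mkQ (fun y hy => ⟨y, hy, rfl⟩)
  obtain ⟨k, hk⟩ := hinj.out J.subtype J.injective_subtype f
  have hle : J ≤ J * J := by
    intro j hj
    have h1 := hk ⟨j, hj⟩
    have h2 : k j = 0 := by
      have : j = j • (1 : R) := by simp
      rw [this, map_smul, hC j hj]
    have h3 : f ⟨j, hj⟩ = 0 := by rw [← h1]; exact h2
    have h4 : (J * J).mkQ j = 0 := congrArg Subtype.val h3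
    rwa [Submodule.mkQ_apply, Submodule.Quotient.mk_eq_zero] at h4
  have hid : IsIdempotentElem J := le_antisymm Ideal.mul_le_right hle
  obtain ⟨e, he, hJe⟩ := (Ideal.isIdempotentElem_iff_of_fg J hJ.1).1 hid
  have h1 : (1 - e : R) = 0 := by
    apply hJ.2.1
    ext ⟨y, hy⟩
    rw [hJe] at hy
    obtain ⟨a, rfl⟩ := Submodule.mem_span_singleton.1 hy
    simp only [LinearMap.smul_apply, Submodule.subtype_apply, smul_eq_mul, zero_smul,
      LinearMap.zero_apply]
    have := he.eq
    linear_combination (-a) * this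
  rw [Ideal.eq_top_iff_one, hJe, sub_eq_zero.1 h1]
  exact Submodule.mem_span_singleton_self e

lemma noeth_of {R : Type u} [CommRing R]
    (H : ∀ (A : Type u) [AddCommGroup A] [Module R A], IsAbsolutelyWPure R A →
        Module.Injective R A) : IsNoetherianRing R := by
  rw [isNoetherianRing_iff_ideal_fg]
  intro I
  have hE : ∀ L : Ideal R, ∃ (E : Type u) (_ : AddCommGroup E) (_ : Module R E)
      (i : (R ⧸ L) →ₗ[R] E), Module.Injective R E ∧ Function.Injective i := by
    intro L
    obtain ⟨⟨E, hEi, f, hf⟩⟩ := EnoughInjectives.presentation (ModuleCat.of R (R ⧸ L))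
    exact ⟨E, inferInstance, inferInstance, f.hom,
      (Module.injective_iff_injective_object R E).2 hEi, (ModuleCat.mono_iff_injective f).1 hf⟩
  choose E _ _ i hEi hi using hE
  let S := {L : Ideal R // L.FG ∧ L ≤ I}
  let T := ∀ L : S, E L.1
  let V : S → Submodule R T := fun L0 =>
    { carrier := {t | ∀ L : S, L0.1 ≤ L.1 → t L = 0}
      add_mem' := fun {a b} ha hb L hL => by
        change a L + b L = 0
        rw [ha L hL, hb L hL, add_zero]
      zero_mem' := fun L hL => rfl
      smul_mem' := fun c a ha L hL => by
        change c • a L = 0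
        rw [ha L hL, smul_zero] }
  have hVdir : Directed (· ≤ ·) V := by
    intro L L'
    refine ⟨⟨L.1 ⊔ L'.1, Submodule.FG.sup L.2.1 L'.2.1, sup_le L.2.2 L'.2.2⟩, ?_, ?_⟩
    · intro t ht K hK
      exact ht K (le_sup_left.trans hK)
    · intro t ht K hK
      exact ht K (le_sup_right.trans hK)
  have : Nonempty S := ⟨⟨⊥, Submodule.fg_bot, bot_le⟩⟩
  let A : Submodule R T := ⨆ L, V L
  have hA : ∀ t, t ∈ A ↔ ∃ L, t ∈ V L := fun t => Submodule.mem_iSup_of_directed V hVdir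
  have hinj : Module.Injective R A := by
    apply H
    apply wpure_of_fp
    intro P _ _ K hK f
    -- the image lies in a single V L0
    have : ∃ L0, ∀ x : K, (f x : T) ∈ V L0 := by
      have hfg : (LinearMap.range (A.subtype ∘ₗ f)).FG := by
        have : Module.Finite R K := Module.Finite.iff_fg.2 hK
        exact Module.Finite.fg_top.map (A.subtype ∘ₗ f) |> fun h => by
          rwa [Submodule.map_top] at h
      have hle : LinearMap.range (A.subtype ∘ₗ f) ≤ ⨆ L, V L := by
        rintro _ ⟨x, rfl⟩
        exact (f x).2
      obtain ⟨_, ⟨L0, rfl⟩, hL0⟩ := (Submodule.fg_iff_compact _).1 hfg (Set.range V) _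
        (Set.range_nonempty V) hVdir.directedOn_range isLUB_iSup hle
      exact ⟨L0, fun x => hL0 ⟨x, rfl⟩⟩
    obtain ⟨L0, hL0⟩ := this
    have hext : ∀ L : S, ∃ g : P →ₗ[R] E L.1, ∀ x : K, g x = (f x : T) L := by
      intro L
      exact (hEi L.1).out K.subtype K.injective_subtype
        (LinearMap.proj L ∘ₗ A.subtype ∘ₗ f)
    choose g hg using hext
    classical
    let G : P →ₗ[R] T := LinearMap.pi (fun L => if L0.1 ≤ L.1 then 0 else g L)
    have hG : ∀ x, G x ∈ A := by
      intro x
      rw [hA]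
      refine ⟨L0, fun L hL => ?_⟩
      change (if L0.1 ≤ L.1 then (0 : P →ₗ[R] E L.1) else g L) x = 0
      rw [if_pos hL]; rfl
    refine ⟨LinearMap.codRestrict A G hG, fun x => ?_⟩
    apply Subtype.ext
    funext L
    change (if L0.1 ≤ L.1 then (0 : P →ₗ[R] E L.1) else g L) x = (f x : T) L
    split_ifs with h
    · exact (hL0 x L h).symm
    · exact hg L x
  let F : R →ₗ[R] T := LinearMap.pi (fun L => i L.1 ∘ₗ L.1.mkQ)
  have hF : ∀ x (L : S), x ∈ L.1 → F x L = 0 := by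
    intro x L hx
    change i L.1 (L.1.mkQ x) = 0
    rw [Submodule.mkQ_apply, (Submodule.Quotient.mk_eq_zero _).2 hx, map_zero]
  let f : I →ₗ[R] A := LinearMap.codRestrict A (F ∘ₗ I.subtype) (fun x => by
    rw [hA]
    refine ⟨⟨Ideal.span {(x : R)}, ⟨{(x : R)}, by simp⟩,
      (Ideal.span_singleton_le_iff_mem I).2 x.2⟩, fun L hL => ?_⟩
    exact hF x L (hL (Ideal.mem_span_singleton_self _)))
  obtain ⟨k, hk⟩ := hinj.out I.subtype I.injective_subtype f
  obtain ⟨L0, hL0⟩ := (hA _).1 (k 1).2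
  have hz := hL0 L0 le_rfl
  have : I = L0.1 := by
    apply le_antisymm _ L0.2.2
    intro x hx
    have h1 : k x = f ⟨x, hx⟩ := hk ⟨x, hx⟩
    have h2 : k x = x • k 1 := by
      rw [← map_smul]; simp
    have h3 : i L0.1 (L0.1.mkQ x) = 0 := by
      have h4 : (f ⟨x, hx⟩ : T) L0 = x • ((k 1 : T) L0) := by
        rw [← h1, h2]; rfl
      rw [hz, smul_zero] at h4
      exact h4
    have h5 := hi L0.1 (h3.trans (map_zero _).symm)
    rwa [Submodule.mkQ_apply, Submodule.Quotient.mk_eq_zero] at h5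
  rw [this]
  exact L0.2.1

/-- `R` is a Noetherian DW-ring iff every module is `w`-FP-projective, iff every
absolutely `w`-pure module is injective. -/
theorem noetherianDW_characterization (R : Type u) [CommRing R] :
    ((∀ (M : Type u) [AddCommGroup M] [Module R M], IsWFPProjective R M) ↔
      (IsNoetherianRing R ∧ IsDWRing R)) ∧
    ((∀ (A : Type u) [AddCommGroup A] [Module R A], IsAbsolutelyWPure R A →
        Module.Injective R A) ↔
      (IsNoetherianRing R ∧ IsDWRing R)) := by 
  have h32 : (IsNoetherianRing R ∧ IsDWRing R) →
      ∀ (A : Type u) [AddCommGroup A] [Module R A], IsAbsolutelyWPure R A →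
        Module.Injective R A := by
    rintro ⟨hN, hD⟩ A _ _ hA
    apply inj_of_ext
    intro I
    rw [ext_subsingleton_iff]
    intro x
    obtain ⟨J, hJ, hJx⟩ := hA (R ⧸ I) (Module.finitePresentation_of_finite R _) x
    exact hJx 1 (by rw [gv_eq_top_of_dw hD J hJ]; trivial)
  refine ⟨⟨fun h => ?_, fun h M _ _ A _ _ hA => ext_of_inj M A (h32 h A hA)⟩,
    ⟨fun h => ⟨noeth_of h, dw_of h⟩, h32⟩⟩
  have h2 : ∀ (A : Type u) [AddCommGroup A] [Module R A], IsAbsolutelyWPure R A →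
      Module.Injective R A := fun A _ _ hA => inj_of_ext A (fun I => h (R ⧸ I) A hA)
  exact ⟨noeth_of h2, dw_of h2⟩
end

section
/- For a commutative ring R, the following are equivalent: (1) every submodule of a w-FP-projective R-module is w-FP-projective; (2) every ideal of R is w-FP-projective; (3) every absolutely w-pure R-module has injective dimension at most 1; (4) R is an FP-hereditary DW-ring. -/
open CategoryTheory

universe u

def IsAbsolutelyPure (R : Type u) [CommRing R]
    (A : Type u) [AddCommGroup A] [Module R A] : Prop :=
  ∀ (N : Type u) [AddCommGroup N] [Module R N], Module.FinitePresentation R N →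
    Subsingleton (extMod R N A 1)

def IsFPProjective (R : Type u) [CommRing R]
    (M : Type u) [AddCommGroup M] [Module R M] : Prop :=
  ∀ (A : Type u) [AddCommGroup A] [Module R A], IsAbsolutelyPure R A →
    Subsingleton (extMod R M A 1)

theorem ext_sub_iff {R : Type u} [CommRing R] (M A : Type u) [AddCommGroup M] [Module R M]
    [AddCommGroup A] [Module R A] (P : ProjectiveResolution (ModuleCat.of R M)) (n : ℕ) :
    Subsingleton (extMod R M A (n+1)) ↔
    ∀ f : P.complex.X (n+1) →ₗ[R] A, f ∘ₗ (P.complex.d (n+2) (n+1)).hom = 0 →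
      ∃ g : P.complex.X n →ₗ[R] A, f = g ∘ₗ (P.complex.d (n+1) n).hom := by
  have e := P.isoExt (R := R) (n+1) (ModuleCat.of R A)
  rw [extMod, ← ModuleCat.isZero_iff_subsingleton, e.isZero_iff,
    ← HomologicalComplex.exactAt_iff_isZero_homology,
    HomologicalComplex.exactAt_iff' _ n (n+1) (n+2) (by simp) (by simp),
    ShortComplex.moduleCat_exact_iff]
  constructor
  · intro h f hf
    obtain ⟨g, hg⟩ := h (ModuleCat.ofHom f) (by
      apply ModuleCat.hom_ext
      exact hf)
    refine ⟨ModuleCat.Hom.hom g, ?_⟩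
    have := congrArg ModuleCat.Hom.hom hg
    exact this.symm
  · intro h f hf
    obtain ⟨g, hg⟩ := h (ModuleCat.Hom.hom f) (by
      have := congrArg ModuleCat.Hom.hom hf
      exact this)
    refine ⟨ModuleCat.ofHom g, ?_⟩
    apply ModuleCat.hom_ext
    exact hg.symm

theorem ext_ann {R : Type u} [CommRing R] (M A : Type u) [AddCommGroup M] [Module R M]
    [AddCommGroup A] [Module R A] (n : ℕ) (r : R) (hr : ∀ a : A, r • a = 0)
    (x : extMod R M A n) : r • x = 0 := by
  let P := ProjectiveResolution.of (ModuleCat.of R M)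
  let e : extMod R M A n ≃ₗ[R] _ := (P.isoExt (R := R) n (ModuleCat.of R A)).toLinearEquiv
  apply e.injective
  rw [map_zero, map_smul]
  generalize e x = y
  obtain ⟨z, rfl⟩ := (ModuleCat.epi_iff_surjective
    ((P.complex.linearYonedaObj R (ModuleCat.of R A)).homologyπ n)).1 inferInstance y
  rw [← map_smul]
  have : r • z = 0 := by
    apply (ModuleCat.mono_iff_injective
      ((P.complex.linearYonedaObj R (ModuleCat.of R A)).iCycles n)).1 inferInstance
    rw [map_zero, map_smul]
    apply ModuleCat.hom_ext
    apply LinearMap.ext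
    intro t
    exact hr _
  rw [this, map_zero]

/-- every map from the kernel of `q` to `A` extends to the source of `q`. -/
def ExtProp {R : Type u} [CommRing R] {X M : Type u} [AddCommGroup X] [Module R X]
    [AddCommGroup M] [Module R M] (q : X →ₗ[R] M) (A : Type u) [AddCommGroup A] [Module R A] :
    Prop :=
  ∀ g : LinearMap.ker q →ₗ[R] A, ∃ g' : X →ₗ[R] A, ∀ k : LinearMap.ker q, g' k = g k

section
variable {R : Type u} [CommRing R]

theorem extProp_iff_of_exact {X₂ X₁ X₀ M A : Type u}
    [AddCommGroup X₂] [Module R X₂] [AddCommGroup X₁] [Module R X₁]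
    [AddCommGroup X₀] [Module R X₀] [AddCommGroup M] [Module R M] [AddCommGroup A] [Module R A]
    (d₂ : X₂ →ₗ[R] X₁) (d₁ : X₁ →ₗ[R] X₀) (q : X₀ →ₗ[R] M)
    (h₁ : Function.Exact d₂ d₁) (h₀ : Function.Exact d₁ q) :
    (∀ f : X₁ →ₗ[R] A, f ∘ₗ d₂ = 0 → ∃ g : X₀ →ₗ[R] A, f = g ∘ₗ d₁) ↔ ExtProp q A := by
  let d : X₁ →ₗ[R] LinearMap.ker q := d₁.codRestrict _ (fun x => (h₀ _).2 ⟨x, rfl⟩)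
  have hd : ∀ x, (d x : X₀) = d₁ x := fun x => rfl
  have hds : Function.Surjective d := by
    rintro ⟨y, hy⟩
    obtain ⟨x, hx⟩ := (h₀ y).1 hy
    exact ⟨x, Subtype.ext hx⟩
  constructor
  · intro h g
    obtain ⟨g', hg'⟩ := h (g ∘ₗ d) (by
      ext x
      have : d (d₂ x) = 0 := Subtype.ext ((h₁ _).2 ⟨x, rfl⟩)
      simp [this])
    refine ⟨g', fun k => ?_⟩
    obtain ⟨x, rfl⟩ := hds k
    exact (LinearMap.congr_fun hg' x).symm
  · intro h f hf
    have hk : LinearMap.ker d ≤ LinearMap.ker f := by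
      intro x hx
      have hx' : d₁ x = 0 := congrArg Subtype.val (show d x = 0 from hx)
      obtain ⟨y, rfl⟩ := (h₁ x).1 hx'
      exact LinearMap.congr_fun hf y
    obtain ⟨g', hg'⟩ := h (((LinearMap.ker d).liftQ f hk) ∘ₗ
      (d.quotKerEquivOfSurjective hds).symm.toLinearMap)
    refine ⟨g', ?_⟩
    ext x
    have h1 := hg' (d x)
    have h2 : (d.quotKerEquivOfSurjective hds).symm (d x) = Submodule.Quotient.mk x := by
      rw [LinearEquiv.symm_apply_eq]
      rfl
    simp only [LinearMap.comp_apply, LinearEquiv.coe_coe, h2] at h1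
    exact h1.symm

theorem extProp_indep {X Y M A : Type u}
    [AddCommGroup X] [Module R X] [AddCommGroup Y] [Module R Y]
    [AddCommGroup M] [Module R M] [AddCommGroup A] [Module R A]
    [Module.Projective R X] [Module.Projective R Y]
    (p : X →ₗ[R] M) (q : Y →ₗ[R] M) (hp : Function.Surjective p) (hq : Function.Surjective q)
    (h : ExtProp p A) : ExtProp q A := by
  intro φ
  obtain ⟨ρ, hρ⟩ := Module.projective_lifting_property p q hp
  obtain ⟨σ, hσ⟩ := Module.projective_lifting_property q p hq
  have hρ' : ∀ y, p (ρ y) = q y := fun y => LinearMap.congr_fun hρ y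
  have hσ' : ∀ x, q (σ x) = p x := fun x => LinearMap.congr_fun hσ x
  let s : LinearMap.ker p →ₗ[R] LinearMap.ker q :=
    (σ ∘ₗ (LinearMap.ker p).subtype).codRestrict _ (fun x => by
      rw [LinearMap.mem_ker, LinearMap.comp_apply, hσ']; exact x.2)
  obtain ⟨ψ, hψ⟩ := h (φ ∘ₗ s)
  let t : Y →ₗ[R] LinearMap.ker q := (LinearMap.id - σ ∘ₗ ρ).codRestrict _ (fun y => by
    simp [hσ', hρ'])
  refine ⟨φ ∘ₗ t + ψ ∘ₗ ρ, fun k => ?_⟩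
  have hk : ρ k ∈ LinearMap.ker p := by rw [LinearMap.mem_ker, hρ']; exact k.2
  have h1 := hψ ⟨ρ k, hk⟩
  simp only [LinearMap.add_apply, LinearMap.comp_apply] at h1 ⊢
  rw [h1, ← map_add]
  congr 1
  apply Subtype.ext
  simp [t, s]

theorem exact_of_shortComplex {S : ShortComplex (ModuleCat.{u} R)} (h : S.Exact) :
    Function.Exact S.f.hom S.g.hom := by
  rw [LinearMap.exact_iff]
  exact h.moduleCat_range_eq_ker.symm

theorem ext_one_iff {X M : Type u} [AddCommGroup X] [Module R X] [AddCommGroup M] [Module R M]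
    (A : Type u) [AddCommGroup A] [Module R A] [Module.Projective R X]
    (q : X →ₗ[R] M) (hq : Function.Surjective q) :
    Subsingleton (extMod R M A 1) ↔ ExtProp q A := by
  let P := ProjectiveResolution.of (ModuleCat.of R M)
  let p : P.complex.X 0 →ₗ[R] M := (P.π.f 0).hom
  have hp : Function.Surjective p := (ModuleCat.epi_iff_surjective _).1
    (inferInstanceAs (Epi (P.π.f 0)))
  have : Module.Projective R (P.complex.X 0) :=
    (IsProjective.iff_projective _).2 (P.projective 0)
  rw [ext_sub_iff M A P 0,
    extProp_iff_of_exact (P.complex.d 2 1).hom (P.complex.d 1 0).hom p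
      (exact_of_shortComplex (P.exact_succ 0)) (exact_of_shortComplex P.exact₀)]
  exact ⟨extProp_indep p q hp hq, extProp_indep q p hq hp⟩

theorem ext_two_iff (M : Type u) [AddCommGroup M] [Module R M] :
    ∃ (X : ModuleCat.{u} R) (q : X →ₗ[R] M), Module.Projective R X ∧ Function.Surjective q ∧
      ∀ (A : Type u) [AddCommGroup A] [Module R A],
      (Subsingleton (extMod R M A 2) ↔ Subsingleton (extMod R (LinearMap.ker q) A 1)) := by
  let P := ProjectiveResolution.of (ModuleCat.of R M)
  let p : P.complex.X 0 →ₗ[R] M := (P.π.f 0).hom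
  have hp : Function.Surjective p := (ModuleCat.epi_iff_surjective _).1
    (inferInstanceAs (Epi (P.π.f 0)))
  have hP : ∀ n, Module.Projective R (P.complex.X n) := fun n =>
    (IsProjective.iff_projective _).2 (P.projective n)
  refine ⟨P.complex.X 0, p, hP 0, hp, fun A _ _ => ?_⟩
  have e0 : Function.Exact (P.complex.d 1 0).hom p := exact_of_shortComplex P.exact₀
  have e1 : Function.Exact (P.complex.d 2 1).hom (P.complex.d 1 0).hom :=
    exact_of_shortComplex (P.exact_succ 0)
  have e2 : Function.Exact (P.complex.d 3 2).hom (P.complex.d 2 1).hom :=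
    exact_of_shortComplex (P.exact_succ 1)
  let d : P.complex.X 1 →ₗ[R] LinearMap.ker p :=
    (P.complex.d 1 0).hom.codRestrict _ (fun x => (e0 _).2 ⟨x, rfl⟩)
  have hds : Function.Surjective d := by
    rintro ⟨y, hy⟩
    obtain ⟨x, hx⟩ := (e0 y).1 hy
    exact ⟨x, Subtype.ext hx⟩
  have exactTwo : Function.Exact (P.complex.d 2 1).hom d := by
    intro x
    rw [← e1 x, Subtype.ext_iff]
    rfl
  have := hP 1
  rw [ext_sub_iff M A P 1, ext_one_iff A d hds, extProp_iff_of_exact _ _ _ e2 exactTwo]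

/-- Lifting property against an injective copresentation. -/
theorem ext_one_iff_lift {A E C : Type u} [AddCommGroup A] [Module R A]
    [AddCommGroup E] [Module R E] [AddCommGroup C] [Module R C]
    (i : A →ₗ[R] E) (p : E →ₗ[R] C) (hi : Function.Injective i) (hp : Function.Surjective p)
    (hip : Function.Exact i p) [hE : Module.Injective R E]
    (M : Type u) [AddCommGroup M] [Module R M] :
    Subsingleton (extMod R M A 1) ↔ ∀ h : M →ₗ[R] C, ∃ l : M →ₗ[R] E, p ∘ₗ l = h := by
  let X := M →₀ R
  let q : (M →₀ R) →ₗ[R] M := Finsupp.linearCombination R id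
  have hq : Function.Surjective q := fun m => ⟨Finsupp.single m 1, by simp [q]⟩
  rw [ext_one_iff A q hq]
  constructor
  · intro h f
    obtain ⟨a, ha⟩ := Module.projective_lifting_property p (f ∘ₗ q) hp
    have ha' : ∀ x, p (a x) = f (q x) := fun x => LinearMap.congr_fun ha x
    let ie := LinearEquiv.ofInjective i hi
    have hr : ∀ k : LinearMap.ker q, a k ∈ LinearMap.range i := fun k => by
      apply (hip _).1
      rw [ha', k.2, map_zero]
    obtain ⟨g, hg⟩ := h (ie.symm.toLinearMap ∘ₗ
      (a ∘ₗ (LinearMap.ker q).subtype).codRestrict _ hr)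
    have hg' : ∀ k : LinearMap.ker q, i (g k) = a k := fun k => by
      rw [hg k]
      exact congrArg Subtype.val (ie.apply_symm_apply _)
    let b := a - i ∘ₗ g
    have hb : LinearMap.ker q ≤ LinearMap.ker b := fun k hk => by
      simp [b, hg' ⟨k, hk⟩]
    refine ⟨((LinearMap.ker q).liftQ b hb) ∘ₗ
      (q.quotKerEquivOfSurjective hq).symm.toLinearMap, ?_⟩
    ext m
    obtain ⟨x, rfl⟩ := hq m
    have h2 : (q.quotKerEquivOfSurjective hq).symm (q x) = Submodule.Quotient.mk x := by
      rw [LinearEquiv.symm_apply_eq]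
      rfl
    simp only [LinearMap.comp_apply, LinearEquiv.coe_coe, h2]
    change p (a x - i (g x)) = _
    rw [map_sub, ha', hip.apply_apply_eq_zero, sub_zero]
  · intro h g
    obtain ⟨a, ha⟩ := hE.out (X := LinearMap.ker q) (LinearMap.ker q).subtype
      (Submodule.injective_subtype _) (i ∘ₗ g)
    have hk : LinearMap.ker q ≤ LinearMap.ker (p ∘ₗ a) := fun k hk => by
      have := ha ⟨k, hk⟩
      simp only [Submodule.subtype_apply, LinearMap.comp_apply] at this
      rw [LinearMap.mem_ker, LinearMap.comp_apply, this, hip.apply_apply_eq_zero]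
    obtain ⟨l, hl⟩ := h (((LinearMap.ker q).liftQ (p ∘ₗ a) hk) ∘ₗ
      (q.quotKerEquivOfSurjective hq).symm.toLinearMap)
    have hl' : ∀ x, p (l (q x)) = p (a x) := fun x => by
      have h2 : (q.quotKerEquivOfSurjective hq).symm (q x) = Submodule.Quotient.mk x := by
        rw [LinearEquiv.symm_apply_eq]
        rfl
      have := LinearMap.congr_fun hl (q x)
      simp only [LinearMap.comp_apply, LinearEquiv.coe_coe, h2] at this
      exact this
    let ie := LinearEquiv.ofInjective i hi
    have hr : ∀ x, (a - l ∘ₗ q) x ∈ LinearMap.range i := fun x => by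
      apply (hip _).1
      simp [hl']
    refine ⟨ie.symm.toLinearMap ∘ₗ (a - l ∘ₗ q).codRestrict _ hr, fun k => ?_⟩
    apply hi
    refine (congrArg Subtype.val (ie.apply_symm_apply _)).trans ?_
    have := ha k
    simp only [Submodule.subtype_apply, LinearMap.comp_apply] at this
    simp [this]

theorem exists_inj (A : Type u) [AddCommGroup A] [Module R A] :
    ∃ (E : ModuleCat.{u} R) (i : A →ₗ[R] E), Function.Injective i ∧ Module.Injective R E := by
  let E := CategoryTheory.Injective.under (ModuleCat.of R A)
  refine ⟨E, (CategoryTheory.Injective.ι (ModuleCat.of R A)).hom,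
    (ModuleCat.mono_iff_injective _).1 inferInstance, ?_⟩
  have : CategoryTheory.Injective (ModuleCat.of R E) :=
    inferInstanceAs (CategoryTheory.Injective (CategoryTheory.Injective.under (ModuleCat.of R A)))
  exact Module.injective_module_of_injective_object R E

theorem exists_copres (A : Type u) [AddCommGroup A] [Module R A] :
    ∃ (E C : ModuleCat.{u} R) (i : A →ₗ[R] E) (p : E →ₗ[R] C), Function.Injective i ∧
      Function.Surjective p ∧ Function.Exact i p ∧ Module.Injective R E := by
  obtain ⟨E, i, hi, hE⟩ := exists_inj (R := R) A
  refine ⟨E, ModuleCat.of R (E ⧸ LinearMap.range i), i, (LinearMap.range i).mkQ, hi,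
    Submodule.mkQ_surjective _, ?_, hE⟩
  rw [LinearMap.exact_iff]
  simp

/-- The ideals having vanishing `Ext^1` against `A` is equivalent to injective cokernel. -/
theorem injective_of_ideals {A E C : Type u} [AddCommGroup A] [Module R A]
    [AddCommGroup E] [Module R E] [AddCommGroup C] [Module R C]
    (i : A →ₗ[R] E) (p : E →ₗ[R] C) (hi : Function.Injective i) (hp : Function.Surjective p)
    (hip : Function.Exact i p) [hE : Module.Injective R E]
    (h : ∀ I : Ideal R, Subsingleton (extMod R I A 1)) : Module.Injective R C := by
  apply Module.Baer.injective
  intro I g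
  obtain ⟨l, hl⟩ := (ext_one_iff_lift i p hi hp hip I).1 (h I) g
  obtain ⟨a, ha⟩ := hE.out I.subtype (Submodule.injective_subtype _) l
  refine ⟨p ∘ₗ a, fun x hx => ?_⟩
  rw [← hl, LinearMap.comp_apply, LinearMap.comp_apply, ← ha ⟨x, hx⟩]
  rfl

theorem ext_one_submodule {A E C : Type u} [AddCommGroup A] [Module R A]
    [AddCommGroup E] [Module R E] [AddCommGroup C] [Module R C]
    (i : A →ₗ[R] E) (p : E →ₗ[R] C) (hi : Function.Injective i) (hp : Function.Surjective p)
    (hip : Function.Exact i p) [hE : Module.Injective R E] [hC : Module.Injective R C]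
    (N M : Type u) [AddCommGroup N] [Module R N] [AddCommGroup M] [Module R M]
    (f : N →ₗ[R] M) (hf : Function.Injective f) (hM : Subsingleton (extMod R M A 1)) :
    Subsingleton (extMod R N A 1) := by
  rw [ext_one_iff_lift i p hi hp hip] at hM ⊢
  intro h
  obtain ⟨a, ha⟩ := hC.out f hf h
  obtain ⟨l, hl⟩ := hM a
  refine ⟨l ∘ₗ f, ?_⟩
  rw [← LinearMap.comp_assoc, hl]
  ext x
  exact ha x

theorem ext_one_projective (M A : Type u) [AddCommGroup M] [Module R M] [AddCommGroup A]
    [Module R A] [Module.Projective R M] : Subsingleton (extMod R M A 1) := by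
  rw [ext_one_iff A (LinearMap.id : M →ₗ[R] M) Function.surjective_id]
  intro g
  refine ⟨0, fun k => ?_⟩
  have : k = 0 := Subtype.ext k.2
  rw [this]
  exact (map_zero g).symm

theorem ext_two_of_ideals (A : Type u) [AddCommGroup A] [Module R A]
    (h : ∀ I : Ideal R, Subsingleton (extMod R I A 1))
    (N : Type u) [AddCommGroup N] [Module R N] : Subsingleton (extMod R N A 2) := by
  obtain ⟨E, C, i, p, hi, hp, hip, hE⟩ := exists_copres (R := R) A
  have hC := injective_of_ideals i p hi hp hip h
  obtain ⟨X, q, hX, hq, H⟩ := ext_two_iff (R := R) N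
  rw [H]
  exact ext_one_submodule i p hi hp hip _ X (LinearMap.ker q).subtype
    (Submodule.injective_subtype _) (ext_one_projective X A)

theorem ideals_of_ext_two (A : Type u) [AddCommGroup A] [Module R A]
    (h : ∀ (N : Type u) [AddCommGroup N] [Module R N], Subsingleton (extMod R N A 2))
    (I : Ideal R) : Subsingleton (extMod R I A 1) := by
  obtain ⟨E, C, i, p, hi, hp, hip, hE⟩ := exists_copres (R := R) A
  have hC : Module.Injective R C := by
    apply Module.Baer.injective
    intro J g
    obtain ⟨X, q, hX, hq, H⟩ := ext_two_iff (R := R) (R ⧸ J)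
    have h1 := (H A).1 (h _)
    rw [ext_one_iff_lift i p hi hp hip] at h1
    have h2 : ExtProp q C := by
      intro φ
      obtain ⟨l, hl⟩ := h1 φ
      obtain ⟨a, ha⟩ := hE.out (LinearMap.ker q).subtype (Submodule.injective_subtype _) l
      refine ⟨p ∘ₗ a, fun k => ?_⟩
      rw [← hl, LinearMap.comp_apply, LinearMap.comp_apply, ← ha k]
      rfl
    have h3 : ExtProp J.mkQ C := extProp_indep q J.mkQ hq (Submodule.mkQ_surjective _) h2
    have hJ : LinearMap.ker J.mkQ = J := Submodule.ker_mkQ J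
    obtain ⟨g', hg'⟩ := h3 (g ∘ₗ (LinearEquiv.ofEq _ _ hJ).toLinearMap)
    refine ⟨g', fun x hx => ?_⟩
    exact hg' ⟨x, by rw [hJ]; exact hx⟩
  exact ext_one_submodule i p hi hp hip _ R I.subtype
    (Submodule.injective_subtype _) (ext_one_projective R A)

end

section
variable {R : Type u} [CommRing R]

/-- Families that vanish eventually (along finite subsets of `K`). -/
def evZero {K : Type u} (E : Finset K → ModuleCat.{u} R) : Submodule R (∀ S, E S) where
  carrier := {x | ∃ S₀ : Finset K, ∀ S, S₀ ⊆ S → x S = 0}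
  zero_mem' := ⟨∅, fun _ _ => rfl⟩
  add_mem' := by
    classical
    rintro x y ⟨S₁, h₁⟩ ⟨S₂, h₂⟩
    refine ⟨S₁ ∪ S₂, fun S hS => ?_⟩
    rw [Pi.add_apply, h₁ S (Finset.union_subset_left hS), h₂ S (Finset.union_subset_right hS),
      add_zero]
  smul_mem' := by
    rintro r x ⟨S₁, h₁⟩
    refine ⟨S₁, fun S hS => ?_⟩
    rw [Pi.smul_apply, h₁ S hS, smul_zero]

theorem evZero_bound {K : Type u} (E : Finset K → ModuleCat.{u} R) (Y : Type u) [AddCommGroup Y]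
    [Module R Y] [Module.Finite R Y] (φ : Y →ₗ[R] evZero E) :
    ∃ S₀ : Finset K, ∀ y : Y, ∀ S, S₀ ⊆ S → (φ y : ∀ S, E S) S = 0 := by
  classical
  obtain ⟨s, hs⟩ := (Module.Finite.fg_top : (⊤ : Submodule R Y).FG)
  have h : ∀ y : Y, ∃ S₀ : Finset K, ∀ S, S₀ ⊆ S → (φ y : ∀ S, E S) S = 0 := fun y => (φ y).2
  choose b hb using h
  refine ⟨s.biUnion b, fun y => ?_⟩
  have hy : y ∈ Submodule.span R (s : Set Y) := by rw [hs]; trivial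
  induction hy using Submodule.span_induction with
  | mem x hx =>
    intro S hS
    exact hb x S ((Finset.subset_biUnion_of_mem b hx).trans hS)
  | zero => intro S _; simp
  | add x y _ _ hx hy =>
    intro S hS
    have h1 := hx S hS
    have h2 := hy S hS
    simp [h1, h2]
  | smul r x _ hx =>
    intro S hS
    have h1 := hx S hS
    simp [h1]

theorem evZero_absPure {K : Type u} (E : Finset K → ModuleCat.{u} R)
    (hE : ∀ S, Module.Injective R (E S)) : IsAbsolutelyPure R (evZero E) := by
  classical
  intro N _ _ hN
  obtain ⟨n, q, hq⟩ := Module.Finite.exists_fin' R N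
  have hK : (LinearMap.ker q).FG := Module.FinitePresentation.fg_ker q hq
  have : Module.Finite R (LinearMap.ker q) := Module.Finite.iff_fg.2 hK
  rw [ext_one_iff (evZero E) q hq]
  intro g
  obtain ⟨S₀, hS₀⟩ := evZero_bound E _ g
  have hx : ∀ S, ∃ a : (Fin n → R) →ₗ[R] E S, ∀ k : LinearMap.ker q, a k = (g k : ∀ S, E S) S := by
    intro S
    obtain ⟨a, ha⟩ := (hE S).out (X := LinearMap.ker q) (LinearMap.ker q).subtype
      (Submodule.injective_subtype _) (LinearMap.proj S ∘ₗ (evZero E).subtype ∘ₗ g)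
    exact ⟨a, ha⟩
  choose a ha using hx
  let a' : ∀ S, (Fin n → R) →ₗ[R] E S := fun S => if S₀ ⊆ S then 0 else a S
  refine ⟨(LinearMap.pi a').codRestrict _ (fun x => ⟨S₀, fun S hS => ?_⟩), fun k => ?_⟩
  · simp [a', hS]
  · apply Subtype.ext
    funext S
    change a' S k = _
    by_cases hS : S₀ ⊆ S
    · rw [hS₀ k S hS]
      simp [a', hS]
    · simp [a', hS, ha]

theorem fg_ker_of_fpProj {X M : Type u} [AddCommGroup X] [Module R X] [AddCommGroup M] [Module R M]
    [Module.Projective R X] [Module.Finite R X] (q : X →ₗ[R] M) (hq : Function.Surjective q)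
    (hM : IsFPProjective R M) : (LinearMap.ker q).FG := by
  classical
  let K := LinearMap.ker q
  have h : ∀ S : Finset K, ∃ (E : ModuleCat.{u} R)
    (i : (K ⧸ Submodule.span R (S : Set K)) →ₗ[R] E), Function.Injective i ∧
      Module.Injective R E := fun S => exists_inj _
  choose E i hi hE using h
  have h1 := (ext_one_iff (evZero E) q hq).1 (hM _ (evZero_absPure E hE))
  let φ : K →ₗ[R] evZero E :=
    (LinearMap.pi fun S => i S ∘ₗ (Submodule.span R (S : Set K)).mkQ).codRestrict _ (fun k => by
      refine ⟨{k}, fun S hS => ?_⟩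
      have hk : k ∈ Submodule.span R (S : Set K) :=
        Submodule.subset_span (hS (Finset.mem_singleton_self k))
      have : (Submodule.span R (S : Set K)).mkQ k = 0 :=
        (Submodule.Quotient.mk_eq_zero _).2 hk
      simp only [LinearMap.pi_apply, LinearMap.comp_apply, this, map_zero])
  obtain ⟨g, hg⟩ := h1 φ
  obtain ⟨S₀, hS₀⟩ := evZero_bound E X g
  have : Module.Finite R K := by
    refine ⟨⟨S₀, ?_⟩⟩
    rw [eq_top_iff]
    intro k _
    have h2 := hS₀ k S₀ (Finset.Subset.refl _)
    rw [hg k] at h2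
    have h3 : i S₀ ((Submodule.span R (S₀ : Set K)).mkQ k) = 0 := h2
    have h4 := hi S₀ (h3.trans (map_zero _).symm)
    exact (Submodule.Quotient.mk_eq_zero _).1 h4
  exact Module.Finite.iff_fg.1 this

theorem isGVIdeal_top : IsGVIdeal R (⊤ : Ideal R) := by
  refine ⟨Module.Finite.fg_top, ?_, ?_⟩
  · intro r s h
    have := LinearMap.congr_fun h ⟨1, trivial⟩
    simpa using this
  · intro f
    refine ⟨f ⟨1, trivial⟩, ?_⟩
    ext x
    have : x = (x : R) • (⟨1, trivial⟩ : (⊤ : Ideal R)) := Subtype.ext (by simp)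
    conv_rhs => rw [this, map_smul]
    simp [mul_comm]

theorem absPure_absWPure (A : Type u) [AddCommGroup A] [Module R A] (h : IsAbsolutelyPure R A) :
    IsAbsolutelyWPure R A := by
  intro N _ _ hN x
  have := h N hN
  exact ⟨⊤, isGVIdeal_top, fun j _ => Subsingleton.elim _ _⟩

theorem fpProj_of_wFPProj (M : Type u) [AddCommGroup M] [Module R M] (h : IsWFPProjective R M) :
    IsFPProjective R M :=
  fun A _ _ hA => h A (absPure_absWPure A hA)

theorem gv_eq_top (J : Ideal R) (hJ : IsGVIdeal R J) (hP : IsWFPProjective R J) : J = ⊤ := by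
  obtain ⟨hfg, hinj, hsurj⟩ := hJ
  have : Module.Finite R J := Module.Finite.iff_fg.2 hfg
  obtain ⟨n, q, hq⟩ := Module.Finite.exists_fin' R J
  have hK : Module.Finite R (LinearMap.ker q) :=
    Module.Finite.iff_fg.2 (fg_ker_of_fpProj q hq (fpProj_of_wFPProj _ hP))
  let L : Submodule R (LinearMap.ker q) := J • ⊤
  have hT : IsAbsolutelyWPure R (LinearMap.ker q ⧸ L) := by
    intro N _ _ _ x
    refine ⟨J, ⟨hfg, hinj, hsurj⟩, fun j hj => ext_ann _ _ _ j (fun a => ?_) x⟩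
    obtain ⟨a, rfl⟩ := Submodule.mkQ_surjective _ a
    rw [← map_smul]
    exact (Submodule.Quotient.mk_eq_zero _).2 (Submodule.smul_mem_smul hj trivial)
  obtain ⟨θ₀, hθ₀⟩ := (ext_one_iff _ q hq).1 (hP _ hT) L.mkQ
  obtain ⟨θ, hθ⟩ := Module.projective_lifting_property L.mkQ θ₀ (Submodule.mkQ_surjective _)
  let v : Module.End R (LinearMap.ker q) := θ ∘ₗ (LinearMap.ker q).subtype
  let w : Module.End R (LinearMap.ker q) := 1 - v
  have hw : LinearMap.range w ≤ J • ⊤ := by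
    rintro _ ⟨k, rfl⟩
    apply (Submodule.Quotient.mk_eq_zero L).1
    change L.mkQ (k - θ k) = 0
    rw [map_sub, ← hθ₀ k, ← hθ, LinearMap.comp_apply, sub_self]
  obtain ⟨p, hpm, -, hpc, hp0⟩ :=
    LinearMap.exists_monic_and_natDegree_eq_and_coeff_mem_pow_and_aeval_eq_zero R w J hw
  obtain ⟨p', hp'⟩ := Polynomial.X_sub_C_dvd_sub_C_eval (a := (1 : R)) (p := p)
  set r := p.eval 1 with hr
  have hr1 : r - 1 ∈ J := by
    rw [hr, Polynomial.eval_eq_sum_range, Finset.sum_range_succ]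
    simp only [one_pow, mul_one, hpm.coeff_natDegree, add_sub_cancel_right]
    refine Ideal.sum_mem _ fun k hk => ?_
    exact Ideal.pow_le_self (Nat.sub_ne_zero_of_lt (Finset.mem_range.1 hk)) (hpc k)
  let z : Module.End R (LinearMap.ker q) := Polynomial.aeval w p'
  have hz : ∀ k : LinearMap.ker q, z (θ k) = r • k := by
    intro k
    have h1 := congrArg (Polynomial.aeval w) hp'
    rw [mul_comm, map_sub, hp0, map_mul, map_sub, Polynomial.aeval_X, Polynomial.aeval_C,
      Polynomial.aeval_C, map_one] at h1
    have h2 := LinearMap.congr_fun h1 k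
    have h3 : (w - 1) k = - θ k := by
      change (k - θ k) - k = _
      abel
    rw [Module.End.mul_apply, h3, map_neg] at h2
    simp only [LinearMap.sub_apply, LinearMap.zero_apply, zero_sub, neg_inj,
      Module.algebraMap_end_apply] at h2
    exact h2.symm
  let b : (Fin n → R) →ₗ[R] (Fin n → R) :=
    r • LinearMap.id - (LinearMap.ker q).subtype ∘ₗ z ∘ₗ θ
  have hb : LinearMap.ker q ≤ LinearMap.ker b := fun k hk => by
    have := hz ⟨k, hk⟩
    simp only at this
    simp [b, this]
  let g : J →ₗ[R] (Fin n → R) := ((LinearMap.ker q).liftQ b hb) ∘ₗ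
      (q.quotKerEquivOfSurjective hq).symm.toLinearMap
  have hg : ∀ y, g (q y) = b y := fun x => by
    have h2 : (q.quotKerEquivOfSurjective hq).symm (q x) = Submodule.Quotient.mk x := by
      rw [LinearEquiv.symm_apply_eq]
      rfl
    simp only [g, LinearMap.comp_apply, LinearEquiv.coe_coe, h2]
    rfl
  have hqg : ∀ x : J, q (g x) = r • x := fun x => by
    obtain ⟨y, rfl⟩ := hq x
    rw [hg]
    have : q (z (θ y) : Fin n → R) = 0 := (z (θ y)).2
    simp [b, this]
  have hc : ∀ i : Fin n, ∃ c : R, (c • J.subtype : J →ₗ[R] R) = LinearMap.proj i ∘ₗ g :=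
    fun i => hsurj _
  choose c hc using hc
  have hgc : ∀ x : J, g x = (x : R) • c := fun x => by
    funext i
    have := LinearMap.congr_fun (hc i) x
    simp only [LinearMap.smul_apply, Submodule.subtype_apply, LinearMap.comp_apply,
      LinearMap.proj_apply, smul_eq_mul] at this
    rw [← this, Pi.smul_apply, smul_eq_mul, mul_comm]
  have hrc : ((q c : J) : R) = r := by
    apply hinj
    ext x
    have h1 := congrArg Subtype.val (hqg x)
    rw [hgc, map_smul] at h1
    simpa [mul_comm] using h1
  rw [Ideal.eq_top_iff_one]
  have : r ∈ J := hrc ▸ (q c).2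
  simpa using J.sub_mem this hr1

theorem absWPure_absPure (hDW : IsDWRing R) (A : Type u) [AddCommGroup A] [Module R A]
    (h : IsAbsolutelyWPure R A) : IsAbsolutelyPure R A := by
  intro N _ _ hN
  refine ⟨fun x y => ?_⟩
  have key : ∀ x : extMod R N A 1, x = 0 := by
    intro x
    obtain ⟨J, hJ, hx⟩ := h N hN x
    have hJt : J = ⊤ := by
      by_contra hne
      obtain ⟨m, hm, hJm⟩ := Ideal.exists_le_maximal J hne
      exact hm.ne_top ((Ideal.eq_top_iff_one _).2
        (hDW m hm 1 J hJ (fun j hj => by simpa using hJm hj)))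
    have := hx 1 (by rw [hJt]; trivial)
    rwa [one_smul] at this
  rw [key x, key y]

theorem ideals_iff : (∀ I : Ideal R, IsWFPProjective R I) ↔
      ((∀ I : Ideal R, IsFPProjective R I) ∧ IsDWRing R) := by
  constructor
  · intro h
    refine ⟨fun I => fpProj_of_wFPProj _ (h I), fun m hm x J hJ hx => ?_⟩
    have hJt := gv_eq_top J hJ (h J)
    simpa using hx 1 (by rw [hJt]; trivial)
  · rintro ⟨h, hDW⟩ I A _ _ hA
    exact h I A (absWPure_absPure hDW A hA)

end

/-- The following are equivalent: (1) every submodule of a `w`-FP-projective module is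
`w`-FP-projective; (2) every ideal of `R` is `w`-FP-projective; (3) every absolutely
`w`-pure module has injective dimension at most `1`; (4) `R` is an FP-hereditary
DW-ring. -/
theorem fpHereditaryDW_characterization (R : Type u) [CommRing R] :
    ((∀ (N M : Type u) [AddCommGroup N] [Module R N] [AddCommGroup M] [Module R M],
        IsWFPProjective R M → ∀ f : N →ₗ[R] M, Function.Injective f →
          IsWFPProjective R N) ↔
      ((∀ I : Ideal R, IsFPProjective R I) ∧ IsDWRing R)) ∧
    ((∀ I : Ideal R, IsWFPProjective R I) ↔
      ((∀ I : Ideal R, IsFPProjective R I) ∧ IsDWRing R)) ∧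
    ((∀ (A : Type u) [AddCommGroup A] [Module R A], IsAbsolutelyWPure R A →
        ∀ (N : Type u) [AddCommGroup N] [Module R N], Subsingleton (extMod R N A 2)) ↔
      ((∀ I : Ideal R, IsFPProjective R I) ∧ IsDWRing R)) := by 
  refine ⟨?_, ideals_iff, ?_⟩
  · rw [← ideals_iff]
    constructor
    · intro h I
      exact h I R (fun A _ _ _ => ext_one_projective R A) I.subtype (Submodule.injective_subtype _)
    · intro h N M _ _ _ _ hM f hf A _ _ hA
      obtain ⟨E, C, i, p, hi, hp, hip, hE⟩ := exists_copres (R := R) A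
      have hC := injective_of_ideals i p hi hp hip (fun I => h I A hA)
      exact ext_one_submodule i p hi hp hip N M f hf (hM A hA)
  · rw [← ideals_iff]
    constructor
    · intro h I A _ _ hA
      exact ideals_of_ext_two A (h A hA) I
    · intro h A _ _ hA N _ _
      exact ext_two_of_ideals A (fun I => h I A hA) N
end
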